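/- arXiv:2106.08949 — 3 statements merged into one kernel-verified Lean document; each statement's English description precedes it below -/
import Mathlib

section
/- Let d ≥ 1 be an integer, and for each a > 0 let w(a) be the positive weight sequence determined by w_1(a)⋯w_n(a) = n^a for all n ≥ 1 (that is, w_1(a) = 1 and w_n(a) = (n/(n−1))^a for n ≥ 2). Then the family (B_{w(λ₁)} × ⋯ × B_{w(λ_d)})_{λ∈(0,∞)^d} admits a common hypercyclic algebra on ℓ1(ℕ)^d for the convolution product. -/
open scoped ENNReal
open Finset

noncomputable section

/-- The space `ℓᵖ(ℕ)` of `p`-summable complex sequences. -/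
abbrev lpC (p : ℝ≥0∞) : Type := lp (fun _ : ℕ => ℂ) p

/-- `T` is the product operator `B_{w(lam 0)} × ⋯ × B_{w(lam (d-1))}` of weighted backward
shifts, the weight sequence of the `i`-th factor being `(w (lam i) n)_{n ≥ 1}`. -/
def IsProductShift (p : ℝ≥0∞) [Fact (1 ≤ p)] (d : ℕ) (w : ℝ → ℕ → ℝ)
    (T : (Fin d → lpC p) →L[ℂ] (Fin d → lpC p)) (lam : Fin d → ℝ) : Prop :=
  ∀ (v : Fin d → lpC p) (i : Fin d) (n : ℕ),
    (T v) i n = (w (lam i) (n + 1) : ℂ) * v i (n + 1)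

/-- The family `T lam`, `lam ∈ S`, admits a common hypercyclic algebra for the coordinatewise
product: there is a non-unital subalgebra `A ≠ {0}` of `(ℓᵖ(ℕ))^d` (closed under addition,
scalar multiplication and the componentwise coordinatewise product) every nonzero element of
which is a common hypercyclic vector for the family. -/
def CommonHypercyclicAlgebraCW (p : ℝ≥0∞) [Fact (1 ≤ p)] (d : ℕ) (S : Set (Fin d → ℝ))
    (T : (Fin d → ℝ) → ((Fin d → lpC p) →L[ℂ] (Fin d → lpC p))) : Prop :=
  ∃ A : Set (Fin d → lpC p),
    (0 : Fin d → lpC p) ∈ A ∧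
    (∀ x ∈ A, ∀ y ∈ A, x + y ∈ A) ∧
    (∀ (c : ℂ), ∀ x ∈ A, c • x ∈ A) ∧
    (∀ x ∈ A, ∀ y ∈ A, ∃ z ∈ A, ∀ (i : Fin d) (n : ℕ), z i n = x i n * y i n) ∧
    (∃ x ∈ A, x ≠ 0) ∧
    (∀ x ∈ A, x ≠ 0 → ∀ lam ∈ S, Dense (Set.range fun n : ℕ => ((T lam) ^ (n + 1)) x))

/-- The family `T lam`, `lam ∈ S`, admits a common hypercyclic algebra on `(ℓ¹(ℕ))^d` for the
(componentwise) convolution product. -/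
def CommonHypercyclicAlgebraConv (d : ℕ) (S : Set (Fin d → ℝ))
    (T : (Fin d → ℝ) → ((Fin d → lpC 1) →L[ℂ] (Fin d → lpC 1))) : Prop :=
  ∃ A : Set (Fin d → lpC 1),
    (0 : Fin d → lpC 1) ∈ A ∧
    (∀ x ∈ A, ∀ y ∈ A, x + y ∈ A) ∧
    (∀ (c : ℂ), ∀ x ∈ A, c • x ∈ A) ∧
    (∀ x ∈ A, ∀ y ∈ A, ∃ z ∈ A, ∀ (i : Fin d) (n : ℕ),
        z i n = ∑ k ∈ Finset.range (n + 1), x i k * y i (n - k)) ∧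
    (∃ x ∈ A, x ≠ 0) ∧
    (∀ x ∈ A, x ≠ 0 → ∀ lam ∈ S, Dense (Set.range fun n : ℕ => ((T lam) ^ (n + 1)) x))

/-- The weight sequence with partial products `w 1 (a) ⋯ w n (a) = n ^ a`,
i.e. `w 1 (a) = 1` and `w n (a) = (n / (n - 1)) ^ a` for `n ≥ 2`. -/
def wPow (a : ℝ) (n : ℕ) : ℝ := if n ≤ 1 then 1 else ((n : ℝ) / ((n : ℝ) - 1)) ^ a


/-! ### The `ℓ¹` convolution algebra -/

lemma one_toReal_pos' : (0:ℝ) < (1:ℝ≥0∞).toReal := by norm_num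

lemma lp1_summable (x : lpC 1) : Summable fun k => ‖x k‖ := by
  have := (memℓp_gen_iff one_toReal_pos').1 (lp.memℓp x)
  simpa using this

lemma lp1_norm (x : lpC 1) : ‖x‖ = ∑' k, ‖x k‖ := by
  rw [lp.norm_eq_tsum_rpow one_toReal_pos']
  simp

lemma lp1_mem (f : ℕ → ℂ) (h : Summable fun k => ‖f k‖) :
    Memℓp (E := fun _ : ℕ => ℂ) f 1 := by
  apply (memℓp_gen_iff one_toReal_pos').2
  simpa using h

lemma lp1_le_of {y x : lpC 1} {B : ℝ} (h : ∀ k, ‖y k‖ ≤ B * ‖x k‖) : ‖y‖ ≤ B * ‖x‖ := by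
  rw [lp1_norm, lp1_norm, ← tsum_mul_left]
  exact (lp1_summable y).tsum_le_tsum h ((lp1_summable x).mul_left B)

lemma lp1_shift_le {y x v : lpC 1} {B δ : ℝ} (hB : 0 ≤ B) (n : ℕ)
    (h : ∀ k, ‖y k‖ ≤ δ * ‖v k‖ + B * ‖x (n + k)‖) : ‖y‖ ≤ δ * ‖v‖ + B * ‖x‖ := by
  have hs : Summable fun k => ‖x (n + k)‖ :=
    (lp1_summable x).comp_injective (add_right_injective n)
  have h1 : ∑' k, ‖x (n + k)‖ ≤ ∑' k, ‖x k‖ :=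
    tsum_comp_le_tsum_of_inj (lp1_summable x) (fun _ => norm_nonneg _) (add_right_injective n)
  rw [lp1_norm y, lp1_norm x, lp1_norm v]
  calc ∑' k, ‖y k‖ ≤ ∑' k, (δ * ‖v k‖ + B * ‖x (n + k)‖) :=
        (lp1_summable y).tsum_le_tsum h
          (((lp1_summable v).mul_left δ).add (hs.mul_left B))
    _ = δ * ∑' k, ‖v k‖ + B * ∑' k, ‖x (n + k)‖ := by
        rw [((lp1_summable v).mul_left δ).tsum_add (hs.mul_left B), tsum_mul_left, tsum_mul_left]
    _ ≤ _ := by gcongr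

lemma cconv_summable (x y : lpC 1) :
    Summable fun n => ‖∑ k ∈ range (n + 1), x k * y (n - k)‖ :=
  summable_norm_sum_mul_range_of_summable_norm (lp1_summable x) (lp1_summable y)

/-- convolution -/
def cconv (x y : lpC 1) : lpC 1 :=
  ⟨fun n => ∑ k ∈ range (n + 1), x k * y (n - k), lp1_mem _ (cconv_summable x y)⟩

lemma cconv_apply (x y : lpC 1) (n : ℕ) :
    cconv x y n = ∑ k ∈ range (n + 1), x k * y (n - k) := rfl

lemma cconv_norm (x y : lpC 1) : ‖cconv x y‖ ≤ ‖x‖ * ‖y‖ := by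
  have hx := lp1_summable x
  have hy := lp1_summable y
  have hx' : Summable fun k => ‖(‖x k‖ : ℝ)‖ := by simpa using hx
  have hy' : Summable fun k => ‖(‖y k‖ : ℝ)‖ := by simpa using hy
  rw [lp1_norm, lp1_norm x, lp1_norm y,
    tsum_mul_tsum_eq_tsum_sum_range_of_summable_norm hx' hy']
  refine (lp1_summable (cconv x y)).tsum_le_tsum (fun n => ?_) ?_
  · rw [cconv_apply]
    refine (norm_sum_le _ _).trans (le_of_eq ?_)
    simp
  · have := summable_norm_sum_mul_range_of_summable_norm hx' hy'
    refine this.of_norm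

/-- convolution as a continuous bilinear map -/
def cconvL : lpC 1 →L[ℂ] lpC 1 →L[ℂ] lpC 1 :=
  LinearMap.mkContinuous₂
    (LinearMap.mk₂ ℂ cconv
      (by intro a b c; ext n; simp [cconv_apply, add_mul, Finset.sum_add_distrib])
      (by intro t a b; ext n; simp [cconv_apply, Finset.mul_sum, mul_assoc])
      (by intro a b c; ext n; simp [cconv_apply, mul_add, Finset.sum_add_distrib])
      (by intro t a b; ext n; simp [cconv_apply, Finset.mul_sum, mul_left_comm])) 1
    (by intro x y; simpa using cconv_norm x y)

lemma cconvL_apply (x y : lpC 1) : cconvL x y = cconv x y := rfl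

lemma poly_summable (p : Polynomial ℂ) : Summable fun k => ‖p.coeff k‖ := by
  apply summable_of_ne_finset_zero (s := p.support)
  intro b hb
  simpa using hb

/-- polynomials as elements of `ℓ¹` -/
def iotaP : Polynomial ℂ →ₗ[ℂ] lpC 1 where
  toFun p := ⟨fun k => p.coeff k, lp1_mem _ (poly_summable p)⟩
  map_add' p q := by ext n; simp; rfl
  map_smul' t p := by ext n; simp

lemma iotaP_apply (p : Polynomial ℂ) (k : ℕ) : iotaP p k = p.coeff k := rfl

lemma iotaP_mul (p q : Polynomial ℂ) : iotaP (p * q) = cconv (iotaP p) (iotaP q) := by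
  ext n
  rw [cconv_apply, iotaP_apply, Polynomial.coeff_mul, Finset.Nat.sum_antidiagonal_eq_sum_range_succ_mk]
  rfl

lemma iotaP_norm_mul (p q : Polynomial ℂ) : ‖iotaP (p * q)‖ ≤ ‖iotaP p‖ * ‖iotaP q‖ := by
  rw [iotaP_mul]; exact cconv_norm _ _

lemma iotaP_norm_X_pow (n : ℕ) : ‖iotaP (Polynomial.X ^ n)‖ = 1 := by
  rw [lp1_norm, tsum_eq_single n]
  · simp [iotaP_apply]
  · intro k hk
    simp [iotaP_apply, Polynomial.coeff_X_pow, hk]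

lemma iotaP_norm_one : ‖iotaP 1‖ = 1 := by simpa using iotaP_norm_X_pow 0

lemma iotaP_norm_C_mul (c : ℂ) (p : Polynomial ℂ) :
    ‖iotaP (Polynomial.C c * p)‖ = ‖c‖ * ‖iotaP p‖ := by
  rw [← Polynomial.smul_eq_C_mul, map_smul, norm_smul]

lemma iotaP_norm_natCast_mul (n : ℕ) (p : Polynomial ℂ) :
    ‖iotaP ((n : Polynomial ℂ) * p)‖ = n * ‖iotaP p‖ := by
  have : (n : Polynomial ℂ) = Polynomial.C (n : ℂ) := by simp
  rw [this, iotaP_norm_C_mul]; simp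

lemma iotaP_norm_pow (p : Polynomial ℂ) (n : ℕ) : ‖iotaP (p ^ n)‖ ≤ ‖iotaP p‖ ^ n := by
  induction n with
  | zero => simp [iotaP_norm_one]
  | succ n ih =>
    rw [pow_succ, pow_succ]
    exact (iotaP_norm_mul _ _).trans (by gcongr)

lemma iotaP_norm_X_pow_mul (n : ℕ) (p : Polynomial ℂ) :
    ‖iotaP (Polynomial.X ^ n * p)‖ ≤ ‖iotaP p‖ := by
  simpa [iotaP_norm_X_pow] using iotaP_norm_mul (Polynomial.X ^ n) p

lemma iotaP_norm_add (p q : Polynomial ℂ) : ‖iotaP (p + q)‖ ≤ ‖iotaP p‖ + ‖iotaP q‖ := by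
  rw [map_add]; exact norm_add_le _ _

lemma iotaP_norm_sum {α : Type*} (s : Finset α) (f : α → Polynomial ℂ) :
    ‖iotaP (∑ i ∈ s, f i)‖ ≤ ∑ i ∈ s, ‖iotaP (f i)‖ := by
  rw [map_sum]; exact norm_sum_le _ _

/-- polynomials are dense -/
lemma iotaP_dense : Dense (Set.range iotaP) := by
  intro x
  have h := lp.hasSum_single (p := 1) (by norm_num) x
  refine mem_closure_of_tendsto h (Filter.Eventually.of_forall fun s => ?_)
  refine ⟨∑ n ∈ s, Polynomial.monomial n (x n), ?_⟩
  rw [map_sum]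
  refine Finset.sum_congr rfl fun n _ => ?_
  ext k
  rw [iotaP_apply, Polynomial.coeff_monomial, lp.single_apply]
  by_cases hk : k = n
  · subst hk; simp
  · simp [hk, Ne.symm hk]

lemma lp1_separable : TopologicalSpace.SeparableSpace (lpC 1) := by
  have h1 : TopologicalSpace.IsSeparable (Set.range fun n : ℕ => iotaP (Polynomial.X ^ n)) :=
    (Set.countable_range _).isSeparable
  have h2 := (h1.span (R := ℂ)).closure
  have h3 : closure ((Submodule.span ℂ (Set.range fun n : ℕ => iotaP (Polynomial.X ^ n)) :
      Submodule ℂ (lpC 1)) : Set (lpC 1)) = Set.univ := by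
    apply Set.eq_univ_of_univ_subset
    rw [← iotaP_dense.closure_eq]
    apply closure_mono
    rintro _ ⟨p, rfl⟩
    rw [p.as_sum_range_C_mul_X_pow, map_sum]
    refine Submodule.sum_mem _ fun k _ => ?_
    rw [← Polynomial.smul_eq_C_mul, map_smul]
    exact Submodule.smul_mem _ _ (Submodule.subset_span ⟨k, rfl⟩)
  rw [h3] at h2
  exact TopologicalSpace.isSeparable_univ_iff.1 h2

/-! ### Polynomial algebra -/

lemma taylor_pow (p : ℕ) (G0 : ℝ) (hG : 0 ≤ G0) : ∃ C : ℝ, 0 ≤ C ∧ ∀ g q : Polynomial ℂ,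
    ‖iotaP g‖ ≤ G0 → ‖iotaP q‖ ≤ 1 → ∃ S : Polynomial ℂ,
      (g + q) ^ p = g ^ p + (p : Polynomial ℂ) * g ^ (p - 1) * q + S * q ^ 2 ∧ ‖iotaP S‖ ≤ C := by
  induction p with
  | zero => exact ⟨0, le_rfl, fun g q _ _ => ⟨0, by simp, by simp⟩⟩
  | succ p ih =>
    obtain ⟨C, hC, h⟩ := ih
    refine ⟨p * G0 ^ (p - 1) + (G0 + 1) * C, by positivity, fun g q hg hq => ?_⟩
    obtain ⟨S, hS, hSn⟩ := h g q hg hq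
    refine ⟨(p : Polynomial ℂ) * g ^ (p - 1) + (g + q) * S, ?_, ?_⟩
    · rw [pow_succ, hS]
      rcases p with _ | p
      · simp; ring_nf
      · simp only [Nat.add_sub_cancel]
        push_cast
        ring
    · refine (iotaP_norm_add _ _).trans ?_
      rw [iotaP_norm_natCast_mul]
      have h1 : ‖iotaP (g ^ (p - 1))‖ ≤ G0 ^ (p - 1) :=
        (iotaP_norm_pow _ _).trans (by gcongr)
      have h2 : ‖iotaP ((g + q) * S)‖ ≤ (G0 + 1) * C := by
        refine (iotaP_norm_mul _ _).trans ?_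
        have : ‖iotaP (g + q)‖ ≤ G0 + 1 := (iotaP_norm_add _ _).trans (by linarith)
        gcongr
      gcongr

lemma pow_lead (u : Polynomial ℂ) (e : ℂ) (σ du : ℕ) (hu : u.natDegree ≤ du) (hσ : du ≤ σ)
    (k : ℕ) : ∃ E : Polynomial ℂ,
      (u + Polynomial.C e * Polynomial.X ^ σ) ^ k
        = Polynomial.C (e ^ k) * Polynomial.X ^ (k * σ) + E ∧
      ∀ t, k * σ + du < t + σ → E.coeff t = 0 := by
  induction k with
  | zero => exact ⟨0, by simp, by simp⟩
  | succ k ih =>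
    obtain ⟨E, hE, hv⟩ := ih
    refine ⟨E * (u + Polynomial.C e * Polynomial.X ^ σ)
      + Polynomial.C (e ^ k) * (Polynomial.X ^ (k * σ) * u), ?_, ?_⟩
    · rw [pow_succ, hE, Nat.succ_mul, pow_add, pow_succ, Polynomial.C_mul]
      ring
    · intro t ht
      have ht' : k * σ + du < t := by
        rw [Nat.succ_mul] at ht; omega
      have hg : (u + Polynomial.C e * Polynomial.X ^ σ).natDegree ≤ σ := by
        refine Polynomial.natDegree_add_le_of_degree_le (hu.trans hσ) ?_
        exact Polynomial.natDegree_C_mul_X_pow_le _ _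
      rw [Polynomial.coeff_add, Polynomial.coeff_C_mul, Polynomial.coeff_X_pow_mul', if_pos (by omega),
        Polynomial.coeff_eq_zero_of_natDegree_lt (p := u) (by omega), mul_zero, add_zero,
        Polynomial.coeff_mul]
      refine Finset.sum_eq_zero fun ab hab => ?_
      rw [Finset.HasAntidiagonal.mem_antidiagonal] at hab
      by_cases hb : σ < ab.2
      · rw [Polynomial.coeff_eq_zero_of_natDegree_lt (lt_of_le_of_lt hg hb), mul_zero]
      · rw [hv ab.1 (by omega), zero_mul]

/-- Taylor decomposition of a monic polynomial. -/
lemma poly_decomp (m : ℕ) (R U : ℝ) (e : ℂ) (σ du : ℕ) (hσ : du < σ) (hR : 0 ≤ R) (hU : 0 ≤ U) :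
    ∃ K : ℝ, 0 ≤ K ∧ ∀ (u q : Polynomial ℂ) (c : ℕ → ℂ), u.natDegree ≤ du → ‖iotaP u‖ ≤ U →
      ‖iotaP q‖ ≤ 1 → (∀ p ≤ m + 1, ‖c p‖ ≤ R) → c (m + 1) = 1 →
      ∃ L Q S : Polynomial ℂ,
        ∑ p ∈ range (m + 2), Polynomial.C (c p) * (u + Polynomial.C e * Polynomial.X ^ σ + q) ^ p
          = L + Q * q + S * q ^ 2 ∧
        L.natDegree ≤ (m + 1) * σ ∧ ‖iotaP Q‖ ≤ K ∧ ‖iotaP S‖ ≤ K ∧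
        ∀ t, m * σ + du < t + σ →
          Q.coeff t = if t = m * σ then ((m + 1 : ℕ) : ℂ) * e ^ m else 0 := by
  have hG : 0 ≤ U + ‖e‖ := by positivity
  choose C hC hT using fun p => taylor_pow p (U + ‖e‖) hG
  refine ⟨∑ p ∈ range (m + 2), R * (p * (U + ‖e‖) ^ (p - 1)) + ∑ p ∈ range (m + 2), R * C p,
    ?_, ?_⟩
  · have := fun p => mul_nonneg hR (hC p)
    refine add_nonneg (Finset.sum_nonneg fun p _ => by positivity)
      (Finset.sum_nonneg fun p _ => this p)
  intro u q c hu hun hq hc hc1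
  set g := u + Polynomial.C e * Polynomial.X ^ σ with hg
  have hgn : ‖iotaP g‖ ≤ U + ‖e‖ := by
    refine (iotaP_norm_add _ _).trans ?_
    rw [iotaP_norm_C_mul, iotaP_norm_X_pow, mul_one]
    linarith
  have hgd : g.natDegree ≤ σ := by
    refine Polynomial.natDegree_add_le_of_degree_le (hu.trans hσ.le) ?_
    exact Polynomial.natDegree_C_mul_X_pow_le _ _
  choose S hS hSn using fun p => hT p g q hgn hq
  have hs1 : 0 ≤ ∑ p ∈ range (m + 2), R * (p * (U + ‖e‖) ^ (p - 1)) :=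
    Finset.sum_nonneg fun p _ => by positivity
  have hs2 : 0 ≤ ∑ p ∈ range (m + 2), R * C p :=
    Finset.sum_nonneg fun p _ => mul_nonneg hR (hC p)
  refine ⟨∑ p ∈ range (m + 2), Polynomial.C (c p) * g ^ p,
    ∑ p ∈ range (m + 2), Polynomial.C (c p) * ((p : Polynomial ℂ) * g ^ (p - 1)),
    ∑ p ∈ range (m + 2), Polynomial.C (c p) * S p, ?_, ?_, ?_, ?_, ?_⟩
  · rw [Finset.sum_mul, Finset.sum_mul, ← Finset.sum_add_distrib, ← Finset.sum_add_distrib]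
    refine Finset.sum_congr rfl fun p _ => ?_
    rw [hS p]; ring
  · refine Polynomial.natDegree_sum_le_of_forall_le _ _ fun p hp => ?_
    refine (Polynomial.natDegree_C_mul_le _ _).trans ?_
    refine (Polynomial.natDegree_pow_le_of_le p hgd).trans ?_
    rw [Finset.mem_range] at hp
    exact Nat.mul_le_mul_right _ (by omega)
  · refine (iotaP_norm_sum _ _).trans ?_
    refine le_trans (Finset.sum_le_sum fun p hp => ?_) (le_add_of_nonneg_right hs2)
    rw [iotaP_norm_C_mul, iotaP_norm_natCast_mul]
    have := hc p (by rw [Finset.mem_range] at hp; omega)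
    have h1 : ‖iotaP (g ^ (p - 1))‖ ≤ (U + ‖e‖) ^ (p - 1) :=
      (iotaP_norm_pow _ _).trans (by gcongr)
    gcongr
  · refine (iotaP_norm_sum _ _).trans ?_
    refine le_trans (Finset.sum_le_sum fun p hp => ?_) (le_add_of_nonneg_left hs1)
    rw [iotaP_norm_C_mul]
    have := hc p (by rw [Finset.mem_range] at hp; omega)
    have h1 := hSn p
    gcongr
  · intro t ht
    obtain ⟨E, hE, hEv⟩ := pow_lead u e σ du hu hσ.le m
    rw [Finset.sum_range_succ, Polynomial.coeff_add, hc1, Nat.add_sub_cancel, hg, hE,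
      Polynomial.finsetSum_coeff, Finset.sum_eq_zero, zero_add]
    · have : ((m + 1 : ℕ) : Polynomial ℂ) = Polynomial.C ((m + 1 : ℕ) : ℂ) := by simp
      rw [this, map_one, one_mul, Polynomial.coeff_C_mul, Polynomial.coeff_add, hEv t ht, add_zero,
        Polynomial.coeff_C_mul, Polynomial.coeff_X_pow]
      split_ifs <;> simp
    · intro p hp
      rw [Finset.mem_range] at hp
      rw [Polynomial.coeff_C_mul]
      rcases p with _ | p
      · simp
      · rw [Nat.add_sub_cancel, Polynomial.coeff_natCast_mul,
          Polynomial.coeff_eq_zero_of_natDegree_lt, mul_zero, mul_zero]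
        refine lt_of_le_of_lt (Polynomial.natDegree_pow_le_of_le p hgd) ?_
        have : (p + 1) * σ ≤ m * σ := Nat.mul_le_mul_right _ (by omega)
        rw [Nat.succ_mul] at this
        omega

lemma coeff_mul_hi {P r : Polynomial ℂ} {s D k : ℕ} (hP : ∀ t, s ≤ t + D → P.coeff t = 0)
    (hr : r.natDegree ≤ D) (hk : s ≤ k) : (P * r).coeff k = 0 := by
  rw [Polynomial.coeff_mul]
  refine Finset.sum_eq_zero fun ab hab => ?_
  rw [Finset.HasAntidiagonal.mem_antidiagonal] at hab
  by_cases hb : D < ab.2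
  · rw [Polynomial.coeff_eq_zero_of_natDegree_lt (lt_of_le_of_lt hr hb), mul_zero]
  · rw [hP ab.1 (by omega), zero_mul]

lemma coeff_mul_lo {P r : Polynomial ℂ} {s t k : ℕ} (hP : ∀ i < s, P.coeff i = 0)
    (hr : ∀ i < t, r.coeff i = 0) (hk : k < s + t) : (P * r).coeff k = 0 := by
  rw [Polynomial.coeff_mul]
  refine Finset.sum_eq_zero fun ab hab => ?_
  rw [Finset.HasAntidiagonal.mem_antidiagonal] at hab
  by_cases hb : ab.2 < t
  · rw [hr _ hb, mul_zero]
  · rw [hP ab.1 (by omega), zero_mul]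

/-- isolating the `j`-th block. -/
lemma block_coeff (m σ du D G J : ℕ) (A : ℂ) (L Q S : Polynomial ℂ)
    (hσ : du + D < σ) (hG : 2 * ((m + 1) * σ) + D < G)
    (hL : L.natDegree ≤ (m + 1) * σ)
    (hQ : ∀ t, m * σ + du < t + σ → Q.coeff t = if t = m * σ then A else 0)
    (r : Fin J → Polynomial ℂ) (hr : ∀ l, (r l).natDegree ≤ D) (j : Fin J)
    (q : Polynomial ℂ)
    (hq : q = ∑ l : Fin J, Polynomial.X ^ (2 * J * G + l * G - m * σ) * r l) :
    ∃ h : Polynomial ℂ,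
      ‖iotaP h‖ ≤ ‖iotaP Q‖ * (∑ l, ‖iotaP (r l)‖) + ‖iotaP S‖ * (∑ l, ‖iotaP (r l)‖) ^ 2 ∧
      (∀ k, 2 * k < G → h.coeff (2 * J * G + j * G + k) = 0) ∧
      ∀ k, (L + Q * q + S * q ^ 2).coeff (2 * J * G + j * G + k)
        = A * (r j).coeff k + h.coeff (2 * J * G + j * G + k) := by
  have hmσ : m * σ + σ = (m + 1) * σ := by ring
  have hJ : 1 ≤ J := by have := j.2; omega
  have hJG : G ≤ J * G := Nat.le_mul_of_pos_left G hJ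
  have hjG : j * G + G ≤ J * G := by
    have : (j + 1) * G ≤ J * G := Nat.mul_le_mul_right _ j.2
    linarith
  have hassoc : 2 * J * G = 2 * (J * G) := by ring
  have hn : ∀ l : Fin J, m * σ ≤ 2 * J * G + l * G := by
    intro l
    have : 0 ≤ l * G := Nat.zero_le _
    omega
  set b : Fin J → Polynomial ℂ := fun l => Polynomial.X ^ (2 * J * G + l * G - m * σ) * r l with hb
  have hbn : ∀ l, ‖iotaP (b l)‖ ≤ ‖iotaP (r l)‖ := fun l => iotaP_norm_X_pow_mul _ _
  set s1 : Polynomial ℂ := ∑ l ∈ univ.filter (fun l => j < l), b l with hs1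
  set s2 : Polynomial ℂ := ∑ l ∈ univ.filter (fun l => l < j), b l with hs2
  have hsplit : q = s2 + b j + s1 := by
    rw [hq]
    have h1 := Finset.sum_filter_add_sum_filter_not univ (fun l => l < j) b
    have h2 := Finset.sum_filter_add_sum_filter_not (univ.filter (fun l => ¬ l < j))
      (fun l => j < l) b
    rw [Finset.filter_filter, Finset.filter_filter] at h2
    have e1 : (univ.filter fun l : Fin J => ¬ l < j ∧ j < l) = univ.filter (fun l => j < l) := by
      ext l; simp; exact fun h => h.le
    have e2 : (univ.filter fun l : Fin J => ¬ l < j ∧ ¬ j < l) = {j} := by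
      ext l; simp; constructor
      · rintro ⟨h1, h2⟩; exact le_antisymm h2 h1
      · rintro rfl; simp
    rw [e1, e2, Finset.sum_singleton] at h2
    rw [← h1, ← h2]; ring
  have hqn : ‖iotaP q‖ ≤ ∑ l, ‖iotaP (r l)‖ := by
    rw [hq]
    exact (iotaP_norm_sum _ _).trans (Finset.sum_le_sum fun l _ => hbn l)
  have hs1n : ‖iotaP s1‖ ≤ ∑ l, ‖iotaP (r l)‖ := by
    refine (iotaP_norm_sum _ _).trans ?_
    refine (Finset.sum_le_sum fun l _ => hbn l).trans ?_
    exact Finset.sum_le_sum_of_subset_of_nonneg (Finset.filter_subset _ _)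
      fun _ _ _ => norm_nonneg _
  have hsn : 0 ≤ ∑ l, ‖iotaP (r l)‖ := Finset.sum_nonneg fun _ _ => norm_nonneg _
  have hblo : ∀ l : Fin J, ∀ i < 2 * J * G + l * G - m * σ, (b l).coeff i = 0 := by
    intro l i hi
    rw [hb]; simp only
    rw [Polynomial.coeff_X_pow_mul', if_neg (by omega)]
  have hqlo : ∀ i < 2 * J * G - m * σ, q.coeff i = 0 := by
    intro i hi
    rw [hq, Polynomial.finsetSum_coeff]
    refine Finset.sum_eq_zero fun l _ => hblo l i ?_
    have : 0 ≤ l * G := Nat.zero_le _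
    omega
  have hQb : ∀ l k, (Q * b l).coeff (2 * J * G + l * G + k) = A * (r l).coeff k := by
    intro l k
    have e : Q * b l = Polynomial.X ^ (2 * J * G + l * G - m * σ) *
        (Polynomial.C A * (Polynomial.X ^ (m * σ) * r l)
          + (Q - Polynomial.C A * Polynomial.X ^ (m * σ)) * r l) := by
      simp only [hb]; ring
    have hl := hn l
    rw [e, Polynomial.coeff_X_pow_mul', if_pos (by omega),
      show 2 * J * G + l * G + k - (2 * J * G + l * G - m * σ) = k + m * σ by omega,
      Polynomial.coeff_add, Polynomial.coeff_C_mul, Polynomial.coeff_X_pow_mul]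
    rw [coeff_mul_hi (s := m * σ) (D := D) _ (hr l) (by omega), add_zero]
    intro t ht
    rw [Polynomial.coeff_sub, hQ t (by omega), Polynomial.coeff_C_mul, Polynomial.coeff_X_pow]
    split_ifs <;> simp
  refine ⟨Q * s1 + S * q ^ 2, ?_, ?_, ?_⟩
  · refine (iotaP_norm_add _ _).trans ?_
    refine add_le_add ((iotaP_norm_mul _ _).trans (by gcongr)) ?_
    refine (iotaP_norm_mul _ _).trans ?_
    have := (iotaP_norm_pow q 2).trans (pow_le_pow_left₀ (norm_nonneg _) hqn 2)
    gcongr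
  · intro k hk
    rw [Polynomial.coeff_add]
    have h1 : (Q * s1).coeff (2 * J * G + j * G + k) = 0 := by
      refine coeff_mul_lo (s := 0) (t := 2 * J * G + j * G + G - m * σ) (by simp) ?_ (by omega)
      intro i hi
      rw [hs1, Polynomial.finsetSum_coeff]
      refine Finset.sum_eq_zero fun l hl => hblo l i ?_
      have hjl : (j : ℕ) + 1 ≤ l := by simpa using hl
      have : (j + 1) * G ≤ l * G := Nat.mul_le_mul_right _ hjl
      rw [Nat.succ_mul] at this
      omega
    have h2 : (S * q ^ 2).coeff (2 * J * G + j * G + k) = 0 := by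
      rw [pow_two]
      refine coeff_mul_lo (s := 0)
        (t := (2 * J * G - m * σ) + (2 * J * G - m * σ)) (by simp) ?_ (by omega)
      intro i hi
      exact coeff_mul_lo hqlo hqlo hi
    rw [h1, h2, add_zero]
  · intro k
    have hLk : L.coeff (2 * J * G + j * G + k) = 0 :=
      Polynomial.coeff_eq_zero_of_natDegree_lt (by
        have : 0 ≤ j * G := Nat.zero_le _
        omega)
    have hlow : (Q * s2).coeff (2 * J * G + j * G + k) = 0 := by
      rw [hs2, Finset.mul_sum, Polynomial.finsetSum_coeff]
      refine Finset.sum_eq_zero fun l hl => ?_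
      have hjl : (l : ℕ) + 1 ≤ j := by simpa using hl
      have : (l + 1) * G ≤ j * G := Nat.mul_le_mul_right _ hjl
      rw [Nat.succ_mul] at this
      rw [show 2 * J * G + j * G + k = 2 * J * G + l * G + (j * G + k - l * G) by omega, hQb,
        Polynomial.coeff_eq_zero_of_natDegree_lt (lt_of_le_of_lt (hr l) (by omega)), mul_zero]
    have e : L + Q * q + S * q ^ 2 = L + Q * s2 + Q * b j + (Q * s1 + S * q ^ 2) := by
      have : Q * q = Q * s2 + Q * b j + Q * s1 := by rw [hsplit]; ring
      rw [this]; ring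
    rw [e, Polynomial.coeff_add, Polynomial.coeff_add, Polynomial.coeff_add, hLk, hlow, hQb]
    ring

/-! ### Weights -/

/-- `max k 1` as a real number -/
def mx (k : ℕ) : ℝ := max (k : ℝ) 1

/-- product of `n` consecutive weights starting after `k` -/
def Wt (a : ℝ) (n k : ℕ) : ℝ := (mx (n + k) / mx k) ^ a

lemma mx_one_le (k : ℕ) : 1 ≤ mx k := le_max_right _ _
lemma mx_pos (k : ℕ) : 0 < mx k := lt_of_lt_of_le one_pos (mx_one_le k)
lemma mx_eq {k : ℕ} (hk : 1 ≤ k) : mx k = k := max_eq_left (by exact_mod_cast hk)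
lemma mx_mono {k l : ℕ} (h : k ≤ l) : mx k ≤ mx l := max_le_max_right _ (by exact_mod_cast h)

lemma ratio_one_le (n k : ℕ) : 1 ≤ mx (n + k) / mx k := by
  rw [le_div_iff₀ (mx_pos k), one_mul]
  exact mx_mono (by omega)

lemma Wt_pos (a : ℝ) (n k : ℕ) : 0 < Wt a n k :=
  Real.rpow_pos_of_pos (div_pos (mx_pos _) (mx_pos _)) _

lemma wPow_eq (a : ℝ) (k : ℕ) : wPow a (k + 1) = Wt a 1 k := by
  unfold wPow Wt
  rcases k with _ | k
  · simp [mx]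
  · rw [if_neg (by omega), mx_eq (by omega), mx_eq (by omega)]
    congr 1
    push_cast
    ring

lemma Wt_succ (a : ℝ) (n k : ℕ) : Wt a (n + 1) k = Wt a 1 k * Wt a n (k + 1) := by
  unfold Wt
  rw [← Real.mul_rpow (div_pos (mx_pos _) (mx_pos _)).le (div_pos (mx_pos _) (mx_pos _)).le]
  congr 1
  have h1 := (mx_pos k).ne'
  have h2 := (mx_pos (k + 1)).ne'
  rw [show 1 + k = k + 1 by ring, show n + (k + 1) = n + 1 + k by ring]
  field_simp

lemma T_pow_apply {d : ℕ} {T : (Fin d → lpC 1) →L[ℂ] (Fin d → lpC 1)} {lam : Fin d → ℝ}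
    (hT : IsProductShift 1 d wPow T lam) (n : ℕ) (v : Fin d → lpC 1) (i : Fin d) (k : ℕ) :
    ((T ^ n) v) i k = (Wt (lam i) n k : ℂ) * v i (n + k) := by
  induction n generalizing k with
  | zero =>
    simp [Wt, div_self (mx_pos k).ne']
  | succ n ih =>
    rw [pow_succ', mul_apply_eq_comp, hT, ih, wPow_eq, Wt_succ (lam i) n k]
    push_cast
    rw [show n + (k + 1) = n + 1 + k by ring]
    ring

lemma Wt_one_le_two {a b : ℝ} (ha : 0 ≤ a) (hab : a ≤ b) (k : ℕ) : Wt a 1 k ≤ 2 ^ b := by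
  unfold Wt
  have h2 : mx (1 + k) / mx k ≤ 2 := by
    rw [div_le_iff₀ (mx_pos k)]
    unfold mx
    push_cast
    have h1 := le_max_left (k : ℝ) 1
    have h2 := le_max_right (k : ℝ) 1
    apply max_le <;> linarith
  calc _ ≤ (2:ℝ) ^ a := Real.rpow_le_rpow (by linarith [ratio_one_le 1 k]) h2 ha
    _ ≤ 2 ^ b := Real.rpow_le_rpow_of_exponent_le (by norm_num) hab

lemma T_norm_le {d : ℕ} {T : (Fin d → lpC 1) →L[ℂ] (Fin d → lpC 1)} {lam : Fin d → ℝ}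
    (hT : IsProductShift 1 d wPow T lam) {b : ℝ} (hl : ∀ i, 0 ≤ lam i ∧ lam i ≤ b)
    (v : Fin d → lpC 1) : ‖T v‖ ≤ 2 ^ b * ‖v‖ := by
  have h2 : (0:ℝ) ≤ 2 ^ b := by positivity
  refine (pi_norm_le_iff_of_nonneg (by positivity)).2 fun i => ?_
  have := lp1_shift_le (y := T v i) (x := v i) (v := 0) (B := 2 ^ b) (δ := 0) h2 1 (fun k => by
    rw [hT, wPow_eq, norm_mul, add_comm 1 k]
    have h3 : ‖((Wt (lam i) 1 k : ℝ) : ℂ)‖ ≤ 2 ^ b := by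
      rw [Complex.norm_real, Real.norm_of_nonneg (Wt_pos _ _ _).le]
      exact Wt_one_le_two (hl i).1 (hl i).2 k
    simp only [zero_mul, zero_add]
    gcongr)
  simp only [zero_mul, zero_add] at this
  exact this.trans (by gcongr; exact norm_le_pi_norm v i)

lemma T_pow_norm_le {d : ℕ} {T : (Fin d → lpC 1) →L[ℂ] (Fin d → lpC 1)} {lam : Fin d → ℝ}
    (hT : IsProductShift 1 d wPow T lam) {b : ℝ} (hl : ∀ i, 0 ≤ lam i ∧ lam i ≤ b)
    (n : ℕ) (v : Fin d → lpC 1) : ‖(T ^ n) v‖ ≤ (2 ^ b) ^ n * ‖v‖ := by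
  induction n with
  | zero => simp
  | succ n ih =>
    rw [pow_succ', mul_apply_eq_comp]
    refine (T_norm_le hT hl _).trans ?_
    calc (2:ℝ) ^ b * ‖(T ^ n) v‖ ≤ 2 ^ b * ((2 ^ b) ^ n * ‖v‖) := by gcongr
      _ = _ := by ring

lemma Wt_ratio {lam mu s Y : ℝ} {n k : ℕ} (hn : 1 ≤ n) (hY : (n + k : ℝ) ≤ Y)
    (hs : |lam - mu| * Real.log Y ≤ s) (hs1 : s ≤ 1) :
    |Wt lam n k / Wt mu n k - 1| ≤ 2 * s := by
  have hr := ratio_one_le n k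
  have hr0 : 0 < mx (n + k) / mx k := by linarith
  have hrY : mx (n + k) / mx k ≤ Y := by
    rw [mx_eq (k := n + k) (by omega)]
    refine (div_le_self (by positivity) (mx_one_le k)).trans ?_
    push_cast; exact hY
  have e : Wt lam n k / Wt mu n k
      = Real.exp (Real.log (mx (n + k) / mx k) * (lam - mu)) := by
    unfold Wt
    rw [← Real.rpow_sub hr0, Real.rpow_def_of_pos hr0]
  have hb : |Real.log (mx (n + k) / mx k) * (lam - mu)| ≤ s := by
    rw [abs_mul, abs_of_nonneg (Real.log_nonneg hr), mul_comm]
    refine le_trans ?_ hs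
    gcongr
  rw [e]
  exact (Real.abs_exp_sub_one_le (hb.trans hs1)).trans (by linarith)

lemma Wt_far {lam b : ℝ} {n k G J : ℕ} (h0 : 0 ≤ lam) (hb : lam ≤ b) (hG : 0 < G)
    (hk : G ≤ 2 * k) (hJ : 1 ≤ J) (hn : n ≤ 3 * (J * G)) : Wt lam n k ≤ (7 * J : ℝ) ^ b := by
  have hk1 : 1 ≤ k := by omega
  have hk0 : (0:ℝ) < k := by exact_mod_cast hk1
  have hJ' : (1:ℝ) ≤ J := by exact_mod_cast hJ
  have h : mx (n + k) / mx k ≤ 7 * J := by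
    rw [mx_eq hk1, mx_eq (by omega), div_le_iff₀ hk0]
    have h1 : (n:ℝ) ≤ 3 * (J * G) := by exact_mod_cast hn
    have h2 : (G:ℝ) ≤ 2 * k := by exact_mod_cast hk
    push_cast
    nlinarith
  calc Wt lam n k ≤ (7 * J : ℝ) ^ lam :=
        Real.rpow_le_rpow (by linarith [ratio_one_le n k]) h h0
    _ ≤ _ := Real.rpow_le_rpow_of_exponent_le (by linarith) hb

lemma Wt_inv_le {mu a : ℝ} {n k D N0 : ℕ} (ha : 0 < a) (hmu : a ≤ mu) (hk : k ≤ D)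
    (hD : D + 1 ≤ N0) (hn : N0 ≤ n) : (Wt mu n k)⁻¹ ≤ ((D + 1 : ℝ) / N0) ^ a := by
  have hN0 : (0:ℝ) < N0 := by exact_mod_cast (by omega : 0 < N0)
  have hD' : (D + 1 : ℝ) ≤ N0 := by exact_mod_cast hD
  have h1 : (N0 : ℝ) / (D + 1) ≤ mx (n + k) / mx k := by
    have e1 : (N0 : ℝ) ≤ mx (n + k) := by
      rw [mx_eq (by omega)]; exact_mod_cast (by omega : N0 ≤ n + k)
    have e2 : mx k ≤ D + 1 := by
      unfold mx
      have : (k:ℝ) ≤ D := by exact_mod_cast hk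
      have : (0:ℝ) ≤ D := by positivity
      apply max_le <;> linarith
    have := mx_pos k
    have := (mx_pos (n + k)).le
    gcongr
  have h0 : 1 ≤ (N0 : ℝ) / (D + 1) := by
    rw [le_div_iff₀ (by positivity)]; linarith
  have h2 : ((N0 : ℝ) / (D + 1)) ^ a ≤ Wt mu n k :=
    (Real.rpow_le_rpow (by linarith) h1 ha.le).trans
      (Real.rpow_le_rpow_of_exponent_le (ratio_one_le n k) hmu)
  have h3 : ((D + 1 : ℝ) / N0) ^ a = (((N0 : ℝ) / (D + 1)) ^ a)⁻¹ := by
    rw [← Real.inv_rpow (by positivity), inv_div]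
  rw [h3]
  exact inv_anti₀ (by positivity) h2

lemma grid_exists {a b t : ℝ} (ha : a ≤ t) (hb : t ≤ b) {M : ℕ} (hM : 1 ≤ M) :
    ∃ c : Fin M, |t - (a + (b - a) * ((c : ℕ) : ℝ) / M)| ≤ (b - a) / M := by
  have hM0 : (0:ℝ) < M := by exact_mod_cast hM
  rcases eq_or_lt_of_le (ha.trans hb) with hab | hab
  · refine ⟨⟨0, hM⟩, ?_⟩
    subst hab
    simp; linarith
  have hba : 0 < b - a := by linarith
  set s := (t - a) / (b - a) * M with hs
  have hs0 : 0 ≤ s := mul_nonneg (div_nonneg (by linarith) hba.le) hM0.le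
  have ht : t = a + (b - a) * s / M := by rw [hs]; field_simp; ring
  have key : ∀ c : ℝ, |s - c| ≤ 1 → |t - (a + (b - a) * c / M)| ≤ (b - a) / M := by
    intro c hc
    have : t - (a + (b - a) * c / M) = (b - a) / M * (s - c) := by rw [ht]; ring
    rw [this, abs_mul, abs_of_nonneg (by positivity)]
    exact mul_le_of_le_one_right (by positivity) hc
  by_cases hlt : s < M
  · refine ⟨⟨⌊s⌋₊, (Nat.floor_lt hs0).2 hlt⟩, key _ ?_⟩
    have h1 := Nat.floor_le hs0
    have h2 := Nat.lt_floor_add_one s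
    simp only
    rw [abs_le]; constructor <;> linarith
  · have hsM : s ≤ M := by
      rw [hs]
      apply mul_le_of_le_one_left hM0.le
      rw [div_le_one hba]; linarith
    refine ⟨⟨M - 1, by omega⟩, key _ ?_⟩
    simp only
    rw [Nat.cast_sub hM]
    push_cast
    rw [abs_le]; constructor <;> linarith

lemma choose_M (K e : ℕ) (hK : 1 ≤ K) (Z : ℕ) (w C θ : ℝ) (hθ : 0 < θ) :
    ∃ M : ℕ, 1 ≤ M ∧ Z ≤ M ^ K ∧ w / M * Real.log (4 * (M : ℝ) ^ e) ≤ θ ∧ C / M ≤ θ := by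
  have t0 : Filter.Tendsto (fun M : ℕ => (M : ℝ)) Filter.atTop Filter.atTop :=
    tendsto_natCast_atTop_atTop
  have t1 : Filter.Tendsto (fun M : ℕ => C / (M : ℝ)) Filter.atTop (nhds 0) :=
    tendsto_const_nhds.div_atTop t0
  have t1' : Filter.Tendsto (fun M : ℕ => w * Real.log 4 / (M : ℝ)) Filter.atTop (nhds 0) :=
    tendsto_const_nhds.div_atTop t0
  have t2 : Filter.Tendsto (fun M : ℕ => Real.log (M : ℝ) / (M : ℝ)) Filter.atTop (nhds 0) := by
    have h := Real.isLittleO_log_id_atTop.tendsto_div_nhds_zero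
    exact h.comp t0
  have t3 : Filter.Tendsto (fun M : ℕ => w / M * Real.log (4 * (M : ℝ) ^ e)) Filter.atTop
      (nhds 0) := by
    have h := t1'.add (t2.const_mul (w * e))
    simp only [mul_zero, add_zero] at h
    refine h.congr' ?_
    filter_upwards [Filter.eventually_ge_atTop 1] with M hM
    have hM0 : (0:ℝ) < M := by exact_mod_cast hM
    rw [Real.log_mul (by norm_num) (by positivity), Real.log_pow]
    ring
  have e1 := t1.eventually (eventually_le_nhds hθ)
  have e3 := t3.eventually (eventually_le_nhds hθ)
  obtain ⟨M, h1, h3, hM1, hMZ⟩ := (e1.and (e3.and ((Filter.eventually_ge_atTop 1).and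
    (Filter.eventually_ge_atTop Z)))).exists
  exact ⟨M, hM1, hMZ.trans (Nat.le_self_pow (by omega) M), h3, h1⟩

/-! ### The core construction -/

/-- the block polynomial -/
def rblk (v : Polynomial ℂ) (A : ℂ) (mu : ℝ) (n : ℕ) : Polynomial ℂ :=
  ∑ k ∈ range (v.natDegree + 1), Polynomial.monomial k (v.coeff k / (A * (Wt mu n k : ℂ)))

lemma rblk_coeff (v : Polynomial ℂ) (A : ℂ) (mu : ℝ) (n k : ℕ) :
    (rblk v A mu n).coeff k = v.coeff k / (A * (Wt mu n k : ℂ)) := by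
  unfold rblk
  simp only [Polynomial.finsetSum_coeff, Polynomial.coeff_monomial]
  rw [Finset.sum_ite_eq']
  split_ifs with h
  · rfl
  · rw [Polynomial.coeff_eq_zero_of_natDegree_lt, zero_div]
    rw [Finset.mem_range] at h; omega

lemma rblk_natDegree (v : Polynomial ℂ) (A : ℂ) (mu : ℝ) (n : ℕ) :
    (rblk v A mu n).natDegree ≤ v.natDegree := by
  rw [Polynomial.natDegree_le_iff_coeff_eq_zero]
  intro k hk
  rw [rblk_coeff, Polynomial.coeff_eq_zero_of_natDegree_lt hk, zero_div]

lemma rblk_norm {v : Polynomial ℂ} {A : ℂ} {mu a : ℝ} {n D N0 : ℕ} (hv : v.natDegree ≤ D)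
    (ha : 0 < a) (hmu : a ≤ mu) (hD : D + 1 ≤ N0) (hn : N0 ≤ n) :
    ‖iotaP (rblk v A mu n)‖ ≤ ((D + 1 : ℝ) / N0) ^ a / ‖A‖ * ‖iotaP v‖ := by
  refine lp1_le_of fun k => ?_
  rw [iotaP_apply, iotaP_apply, rblk_coeff]
  by_cases hk : k ≤ D
  · rw [norm_div, norm_mul, Complex.norm_real, Real.norm_of_nonneg (Wt_pos _ _ _).le]
    have := Wt_inv_le ha hmu hk hD hn
    calc ‖v.coeff k‖ / (‖A‖ * Wt mu n k) = (Wt mu n k)⁻¹ / ‖A‖ * ‖v.coeff k‖ := by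
          rw [div_eq_mul_inv, mul_inv]; ring
      _ ≤ _ := by gcongr
  · rw [Polynomial.coeff_eq_zero_of_natDegree_lt (by omega)]; simp

set_option maxHeartbeats 2000000 in
theorem core (d m : ℕ) (a b R ε : ℝ) (ha : 0 < a) (hab : a ≤ b) (hR : 0 ≤ R) (hε : 0 < ε)
    (u v : Fin d → Polynomial ℂ) :
    ∃ (x : Fin d → Polynomial ℂ) (M : ℕ), (∀ i, ‖iotaP (x i) - iotaP (u i)‖ ≤ ε) ∧
      ∀ lam : Fin d → ℝ, (∀ i, a ≤ lam i ∧ lam i ≤ b) →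
      ∀ c : ℕ → ℂ, (∀ p ≤ m + 1, ‖c p‖ ≤ R) → c (m + 1) = 1 →
      ∃ n < M, ∀ i, ∀ y : lpC 1,
        (∀ k, y k = (Wt (lam i) (n + 1) k : ℂ)
            * (∑ p ∈ range (m + 2), Polynomial.C (c p) * x i ^ p).coeff (n + 1 + k)
            - (v i).coeff k) → ‖y‖ ≤ ε := by
  -- uniform bounds on the data
  obtain ⟨du, hdu⟩ : ∃ du, ∀ i, (u i).natDegree ≤ du :=
    ⟨∑ i, (u i).natDegree, fun i => Finset.single_le_sum
      (f := fun i => (u i).natDegree) (fun _ _ => Nat.zero_le _) (Finset.mem_univ i)⟩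
  obtain ⟨D, hD⟩ : ∃ D, ∀ i, (v i).natDegree ≤ D :=
    ⟨∑ i, (v i).natDegree, fun i => Finset.single_le_sum
      (f := fun i => (v i).natDegree) (fun _ _ => Nat.zero_le _) (Finset.mem_univ i)⟩
  obtain ⟨U, hU0, hU⟩ : ∃ U : ℝ, 0 ≤ U ∧ ∀ i, ‖iotaP (u i)‖ ≤ U :=
    ⟨∑ i, ‖iotaP (u i)‖, Finset.sum_nonneg fun _ _ => norm_nonneg _,
      fun i => Finset.single_le_sum
      (f := fun i => ‖iotaP (u i)‖) (fun _ _ => norm_nonneg _) (Finset.mem_univ i)⟩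
  obtain ⟨V, hV0, hV⟩ : ∃ V : ℝ, 0 ≤ V ∧ ∀ i, ‖iotaP (v i)‖ ≤ V :=
    ⟨∑ i, ‖iotaP (v i)‖, Finset.sum_nonneg fun _ _ => norm_nonneg _,
      fun i => Finset.single_le_sum
      (f := fun i => ‖iotaP (v i)‖) (fun _ _ => norm_nonneg _) (Finset.mem_univ i)⟩
  set σ := du + D + 1 with hσ
  set e : ℂ := ((ε / 2 : ℝ) : ℂ) with he
  have hen : ‖e‖ = ε / 2 := by rw [he, Complex.norm_real, Real.norm_of_nonneg (by positivity)]
  have he0 : e ≠ 0 := by rw [← norm_pos_iff, hen]; positivity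
  obtain ⟨Kc, hKc0, hdec⟩ := poly_decomp m R U e σ du (by omega) hR hU0
  set A : ℂ := ((m + 1 : ℕ) : ℂ) * e ^ m with hA
  have hA0 : A ≠ 0 := mul_ne_zero (by exact_mod_cast Nat.succ_ne_zero m) (pow_ne_zero _ he0)
  have hAn : 0 < ‖A‖ := norm_pos_iff.2 hA0
  -- exponents
  obtain ⟨K, hK⟩ := exists_nat_ge ((d * b + d + 1) / a)
  have hKa : d * b + d + 1 ≤ (K : ℝ) * a := (div_le_iff₀ ha).1 hK
  have hb0 : 0 < b := lt_of_lt_of_le ha hab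
  have hK1 : 1 ≤ K := by
    by_contra h
    have : K = 0 := by omega
    subst this
    have : (0:ℝ) ≤ d * b + d := by positivity
    simp at hKa; linarith
  set C0 : ℝ := (7:ℝ) ^ b * ((D + 1 : ℝ) ^ a / ‖A‖ * V) with hC0
  have hC00 : 0 ≤ C0 := by positivity
  set θ : ℝ := min 1 (min (ε / 2) (min (ε / (4 * (V + 1))) (ε / (4 * (Kc + 1))))) with hθ
  have hθ0 : 0 < θ := by
    rw [hθ]; refine lt_min one_pos (lt_min (by positivity) (lt_min (by positivity) (by positivity)))
  have hθ1 : θ ≤ 1 := min_le_left _ _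
  have hθ2 : θ ≤ ε / 2 := (min_le_right _ _).trans (min_le_left _ _)
  have hθ3 : θ ≤ ε / (4 * (V + 1)) :=
    (min_le_right _ _).trans ((min_le_right _ _).trans (min_le_left _ _))
  have hθ4 : θ ≤ ε / (4 * (Kc + 1)) :=
    (min_le_right _ _).trans ((min_le_right _ _).trans (min_le_right _ _))
  obtain ⟨M, hM1, hMZ, hMlog, hMC⟩ := choose_M K (d + K) hK1 (2 * ((m + 1) * σ) + D + 1)
    (b - a) C0 θ hθ0
  have hM0 : (0:ℝ) < M := by exact_mod_cast hM1
  have hM1' : (1:ℝ) ≤ M := by exact_mod_cast hM1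
  set J := M ^ d with hJ
  set G := M ^ K with hG
  have hJ1 : 1 ≤ J := Nat.one_le_pow _ _ hM1
  have hJ1' : (1:ℝ) ≤ J := by exact_mod_cast hJ1
  have hJG : G ≤ J * G := Nat.le_mul_of_pos_left G hJ1
  have hassoc : 2 * J * G = 2 * (J * G) := by ring
  -- parameters of the blocks
  set mu : Fin J → Fin d → ℝ := fun l i =>
    a + (b - a) * (((finFunctionFinEquiv.symm l) i : ℕ) : ℝ) / M with hmu
  have hmua : ∀ l i, a ≤ mu l i := by
    intro l i
    have : 0 ≤ b - a := by linarith
    have : 0 ≤ (b - a) * (((finFunctionFinEquiv.symm l) i : ℕ) : ℝ) / M := by positivity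
    simp only [hmu]; linarith
  set nn : Fin J → ℕ := fun l => 2 * J * G + l * G with hnn
  set r : Fin d → Fin J → Polynomial ℂ := fun i l => rblk (v i) A (mu l i) (nn l) with hr
  have hrD : ∀ i l, (r i l).natDegree ≤ D := fun i l => (rblk_natDegree _ _ _ _).trans (hD i)
  set κ : ℝ := J * (((D + 1 : ℝ) / (2 * J * G : ℕ)) ^ a / ‖A‖ * V) with hκ
  have hrn : ∀ i, ∑ l, ‖iotaP (r i l)‖ ≤ κ := by
    intro i
    have : ∀ l ∈ (univ : Finset (Fin J)), ‖iotaP (r i l)‖ ≤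
        ((D + 1 : ℝ) / (2 * J * G : ℕ)) ^ a / ‖A‖ * V := by
      intro l _
      refine (rblk_norm (hD i) ha (hmua l i) (N0 := 2 * J * G) (by omega)
        (Nat.le_add_right _ _)).trans ?_
      have := hV i
      gcongr
    refine (Finset.sum_le_sum this).trans ?_
    simp [hκ]
  have hκ0 : 0 ≤ κ := by positivity
  -- the main numeric estimate
  have hκM : (7 * J : ℝ) ^ b * κ ≤ θ := by
    refine le_trans ?_ hMC
    have hJr : (J : ℝ) = (M : ℝ) ^ (d : ℝ) := by rw [hJ]; push_cast; rw [Real.rpow_natCast]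
    have hGr : (G : ℝ) = (M : ℝ) ^ (K : ℝ) := by rw [hG]; push_cast; rw [Real.rpow_natCast]
    have hG0 : (0:ℝ) < G := by rw [hGr]; positivity
    have hN : (G : ℝ) ≤ (2 * J * G : ℕ) := by exact_mod_cast (by omega : G ≤ 2 * J * G)
    have h1 : ((D + 1 : ℝ) / (2 * J * G : ℕ)) ^ a ≤ (D + 1 : ℝ) ^ a * (M : ℝ) ^ (-(K * a)) := by
      have : ((D + 1 : ℝ) / (2 * J * G : ℕ)) ^ a ≤ ((D + 1 : ℝ) / G) ^ a := by gcongr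
      refine this.trans (le_of_eq ?_)
      rw [Real.div_rpow (by positivity) hG0.le, hGr, ← Real.rpow_mul hM0.le, Real.rpow_neg hM0.le]
      rfl
    have h2 : (7 * J : ℝ) ^ b = 7 ^ b * (M : ℝ) ^ (d * b) := by
      rw [Real.mul_rpow (by norm_num) (by positivity), hJr, ← Real.rpow_mul hM0.le]
    have h3 : (M : ℝ) ^ (d * b) * (M : ℝ) ^ (d : ℝ) * (M : ℝ) ^ (-(K * a)) ≤ 1 / M := by
      rw [← Real.rpow_add hM0, ← Real.rpow_add hM0, one_div, ← Real.rpow_neg_one]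
      exact Real.rpow_le_rpow_of_exponent_le hM1' (by linarith)
    calc (7 * J : ℝ) ^ b * κ
        ≤ 7 ^ b * (M : ℝ) ^ (d * b) * ((M : ℝ) ^ (d : ℝ) *
            ((D + 1 : ℝ) ^ a * (M : ℝ) ^ (-(K * a)) / ‖A‖ * V)) := by
          rw [hκ, h2, hJr]; gcongr
      _ = C0 * ((M : ℝ) ^ (d * b) * (M : ℝ) ^ (d : ℝ) * (M : ℝ) ^ (-(K * a))) := by
          rw [hC0]; ring
      _ ≤ C0 * (1 / M) := by gcongr
      _ = C0 / M := by ring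
  have hB1 : 1 ≤ (7 * J : ℝ) ^ b := Real.one_le_rpow (by linarith) hb0.le
  have hκθ : κ ≤ θ := (le_mul_of_one_le_left hκ0 hB1).trans hκM
  -- the vector
  set q : Fin d → Polynomial ℂ := fun i =>
    ∑ l : Fin J, Polynomial.X ^ (2 * J * G + l * G - m * σ) * r i l with hq
  have hqn : ∀ i, ‖iotaP (q i)‖ ≤ κ := fun i =>
    ((iotaP_norm_sum _ _).trans (Finset.sum_le_sum fun l _ => iotaP_norm_X_pow_mul _ _)).trans
      (hrn i)
  refine ⟨fun i => u i + Polynomial.C e * Polynomial.X ^ σ + q i, 3 * (J * G) + 1, ?_, ?_⟩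
  · intro i
    rw [← map_sub, show u i + Polynomial.C e * Polynomial.X ^ σ + q i - u i
      = Polynomial.C e * Polynomial.X ^ σ + q i by ring]
    refine (iotaP_norm_add _ _).trans ?_
    rw [iotaP_norm_C_mul, iotaP_norm_X_pow, hen, mul_one]
    have := hqn i
    linarith
  intro lam hlam c hc hc1
  choose cell hcell using fun i => grid_exists (hlam i).1 (hlam i).2 hM1
  set j : Fin J := finFunctionFinEquiv cell with hj
  have hmuj : ∀ i, |lam i - mu j i| ≤ (b - a) / M := by
    intro i
    have := hcell i
    simp only [hmu, hj, Equiv.symm_apply_apply]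
    exact this
  have hjG : j * G + G ≤ J * G := by
    have : (j + 1) * G ≤ J * G := Nat.mul_le_mul_right _ j.2
    linarith
  have hnj : nn j = 2 * J * G + j * G := rfl
  refine ⟨nn j - 1, by omega, ?_⟩
  intro i y hy
  rw [show nn j - 1 + 1 = nn j by omega] at hy
  obtain ⟨L, Q, S, hPeq, hLd, hQn, hSn, hQc⟩ := hdec (u i) (q i) c (hdu i) (hU i)
    ((hqn i).trans (hκθ.trans hθ1)) hc hc1
  obtain ⟨h, hhn, hhlo, hhc⟩ := block_coeff m σ du D G J A L Q S (by omega) (by omega) hLd hQc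
    (r i) (hrD i) j (q i) rfl
  have hhn' : ‖iotaP h‖ ≤ 2 * Kc * κ := by
    have h1 := hrn i
    have h0 : 0 ≤ ∑ l, ‖iotaP (r i l)‖ := Finset.sum_nonneg fun _ _ => norm_nonneg _
    have h2 : (∑ l, ‖iotaP (r i l)‖) ^ 2 ≤ κ := by
      have h3 : κ ≤ 1 := hκθ.trans hθ1
      nlinarith
    calc ‖iotaP h‖ ≤ _ := hhn
      _ ≤ Kc * κ + Kc * κ := by gcongr
      _ = _ := by ring
  have hy' : ‖y‖ ≤ 2 * θ * ‖iotaP (v i)‖ + (7 * J : ℝ) ^ b * ‖iotaP h‖ := by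
    refine lp1_shift_le (by positivity) (nn j) fun k => ?_
    rw [hy k, hPeq, hnj, hhc k, iotaP_apply, iotaP_apply, ← hnj]
    have hW := Wt_pos (mu j i) (nn j) k
    have hWc : ((Wt (mu j i) (nn j) k : ℝ) : ℂ) ≠ 0 := by exact_mod_cast hW.ne'
    have e1 : (Wt (lam i) (nn j) k : ℂ) * (A * (r i j).coeff k + h.coeff (nn j + k))
        - (v i).coeff k
        = ((Wt (lam i) (nn j) k / Wt (mu j i) (nn j) k - 1 : ℝ) : ℂ) * (v i).coeff k
          + (Wt (lam i) (nn j) k : ℂ) * h.coeff (nn j + k) := by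
      simp only [hr]
      rw [rblk_coeff]
      push_cast
      field_simp
      ring
    rw [e1]
    refine (norm_add_le _ _).trans (add_le_add ?_ ?_)
    · by_cases hk : k ≤ D
      · rw [norm_mul, Complex.norm_real, Real.norm_eq_abs]
        refine mul_le_mul_of_nonneg_right ?_ (norm_nonneg _)
        refine Wt_ratio (Y := 4 * (M : ℝ) ^ (d + K)) (by omega) ?_ ?_ hθ1
        · have : nn j + k ≤ 4 * (J * G) := by omega
          have h2 : ((nn j + k : ℕ) : ℝ) ≤ ((4 * (J * G) : ℕ) : ℝ) := by exact_mod_cast this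
          rw [hJ, hG, ← pow_add] at h2
          push_cast at h2
          exact h2
        · refine le_trans ?_ hMlog
          have hl : 0 ≤ Real.log (4 * (M : ℝ) ^ (d + K)) := by
            apply Real.log_nonneg
            have := one_le_pow₀ hM1' (n := d + K)
            linarith
          exact mul_le_mul_of_nonneg_right (hmuj i) hl
      · have := hD i
        rw [Polynomial.coeff_eq_zero_of_natDegree_lt (p := v i) (by omega)]; simp
    · by_cases hk : 2 * k < G
      · have h0 := hhlo k hk
        rw [← hnj] at h0
        rw [h0]; simp
      · rw [norm_mul, Complex.norm_real, Real.norm_of_nonneg (Wt_pos _ _ _).le]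
        refine mul_le_mul_of_nonneg_right ?_ (norm_nonneg _)
        exact Wt_far (G := G) (ha.le.trans (hlam i).1) (hlam i).2 (by omega) (by omega) hJ1 (by omega)
  have f1 : 2 * θ * ‖iotaP (v i)‖ ≤ ε / 2 := by
    have h1 : θ * (4 * (V + 1)) ≤ ε := (le_div_iff₀ (by positivity)).1 hθ3
    have h2 := mul_le_mul_of_nonneg_left (hV i) hθ0.le
    have h3 : θ * (4 * (V + 1)) = 4 * (θ * V) + 4 * θ := by ring
    linarith
  have f2 : (7 * J : ℝ) ^ b * ‖iotaP h‖ ≤ ε / 2 := by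
    have h1 : θ * (4 * (Kc + 1)) ≤ ε := (le_div_iff₀ (by positivity)).1 hθ4
    calc (7 * J : ℝ) ^ b * ‖iotaP h‖ ≤ (7 * J : ℝ) ^ b * (2 * Kc * κ) := by gcongr
      _ = 2 * Kc * ((7 * J : ℝ) ^ b * κ) := by ring
      _ ≤ 2 * Kc * θ := by gcongr
      _ ≤ ε / 2 := by linarith [show θ * (4 * (Kc + 1)) = 2 * (2 * Kc * θ) + 4 * θ by ring]
  linarith

/-! ### Powers and the Baire argument -/

/-- convolution powers -/
def cpow (x : lpC 1) : ℕ → lpC 1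
  | 0 => iotaP 1
  | p + 1 => cconv (cpow x p) x

lemma cpow_continuous (p : ℕ) : Continuous fun x => cpow x p := by
  induction p with
  | zero => exact continuous_const
  | succ p ih =>
    change Continuous fun x => cconvL (cpow x p) x
    fun_prop

lemma cpow_iotaP (f : Polynomial ℂ) (p : ℕ) : cpow (iotaP f) p = iotaP (f ^ p) := by
  induction p with
  | zero => simp [cpow]
  | succ p ih => rw [cpow, ih, pow_succ, iotaP_mul]

/-- the power series attached to a sequence -/
def toPS : lpC 1 →ₗ[ℂ] PowerSeries ℂ where
  toFun x := PowerSeries.mk fun n => x n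
  map_add' x y := by ext n; simp
  map_smul' t x := by ext n; simp

lemma toPS_coeff (x : lpC 1) (n : ℕ) : PowerSeries.coeff n (toPS x) = x n := by
  simp [toPS]

lemma toPS_injective : Function.Injective toPS := by
  intro x y h
  ext n
  rw [← toPS_coeff, ← toPS_coeff, h]

lemma toPS_cconv (x y : lpC 1) : toPS (cconv x y) = toPS x * toPS y := by
  ext n
  rw [toPS_coeff, cconv_apply, PowerSeries.coeff_mul,
    Finset.Nat.sum_antidiagonal_eq_sum_range_succ_mk]
  simp [toPS_coeff]

lemma toPS_one : toPS (iotaP 1) = 1 := by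
  ext n
  rw [toPS_coeff, iotaP_apply, Polynomial.coeff_one, PowerSeries.coeff_one]

lemma toPS_cpow (x : lpC 1) (p : ℕ) : toPS (cpow x p) = toPS x ^ p := by
  induction p with
  | zero => simp [cpow, toPS_one]
  | succ p ih => rw [cpow, toPS_cconv, ih, pow_succ]

/-- evaluation of a polynomial with coefficients `c` of degree at most `m + 1` -/
def evalP (d m : ℕ) (c : ℕ → ℂ) (x : Fin d → lpC 1) : Fin d → lpC 1 :=
  fun i => ∑ p ∈ range (m + 2), c p • cpow (x i) p

/-- the open dense sets of the Baire argument -/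
def goodSet (d : ℕ) (T : (Fin d → ℝ) → ((Fin d → lpC 1) →L[ℂ] (Fin d → lpC 1)))
    (m : ℕ) (R a b ε : ℝ) (v : Fin d → lpC 1) : Set (Fin d → lpC 1) :=
  {x | ∃ (M : ℕ) (ε' : ℝ), ε' < ε ∧ ∀ lam : Fin d → ℝ, (∀ i, a ≤ lam i ∧ lam i ≤ b) →
    ∀ c : ℕ → ℂ, (∀ p ≤ m + 1, ‖c p‖ ≤ R) → c (m + 1) = 1 →
    ∃ n < M, ‖((T lam) ^ (n + 1)) (evalP d m c x) - v‖ ≤ ε'}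

section Baire

variable {d : ℕ} {T : (Fin d → ℝ) → ((Fin d → lpC 1) →L[ℂ] (Fin d → lpC 1))}

lemma goodSet_isOpen
    (hT : ∀ lam : Fin d → ℝ, (∀ i, 0 < lam i) → IsProductShift 1 d wPow (T lam) lam)
    (m : ℕ) {R a b ε : ℝ} (hR : 0 ≤ R) (ha : 0 < a) (hab : a ≤ b) (v : Fin d → lpC 1) :
    IsOpen (goodSet d T m R a b ε v) := by
  rw [isOpen_iff_mem_nhds]
  rintro x ⟨M, ε', hε', h⟩
  set F : (Fin d → lpC 1) → ℝ := fun y =>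
    ∑ i, ∑ p ∈ range (m + 2), ‖cpow (y i) p - cpow (x i) p‖ with hF
  have hFc : Continuous F := by
    refine continuous_finsetSum _ fun i _ => continuous_finsetSum _ fun p _ => ?_
    exact (((cpow_continuous p).comp (continuous_apply i)).sub continuous_const).norm
  set B : ℝ := ((2:ℝ) ^ b) ^ M * R with hB
  have hb : 0 < b := lt_of_lt_of_le ha hab
  have hB0 : 0 ≤ B := by positivity
  have hev : ∀ᶠ y in nhds x, B * F y < (ε - ε') / 2 := by
    have hc : Continuous fun y => B * F y := continuous_const.mul hFc
    have h0 : B * F x < (ε - ε') / 2 := by simp [hF]; linarith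
    exact hc.continuousAt.eventually (eventually_lt_nhds h0)
  filter_upwards [hev] with y hy
  refine ⟨M, (ε + ε') / 2, by linarith, fun lam hlam c hc hc1 => ?_⟩
  obtain ⟨n, hn, hnv⟩ := h lam hlam c hc hc1
  refine ⟨n, hn, ?_⟩
  have hdiff : ‖evalP d m c y - evalP d m c x‖ ≤ R * F y := by
    have hF0 : 0 ≤ F y := Finset.sum_nonneg fun _ _ => Finset.sum_nonneg fun _ _ => norm_nonneg _
    refine (pi_norm_le_iff_of_nonneg (by positivity)).2 fun i => ?_
    have e : (evalP d m c y - evalP d m c x) i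
        = ∑ p ∈ range (m + 2), c p • (cpow (y i) p - cpow (x i) p) := by
      simp [evalP, smul_sub, Finset.sum_sub_distrib]
    rw [e]
    have h1 : ‖∑ p ∈ range (m + 2), c p • (cpow (y i) p - cpow (x i) p)‖
        ≤ R * ∑ p ∈ range (m + 2), ‖cpow (y i) p - cpow (x i) p‖ := by
      rw [Finset.mul_sum]
      refine (norm_sum_le _ _).trans (Finset.sum_le_sum fun p hp => ?_)
      rw [norm_smul]
      rw [Finset.mem_range] at hp
      have := hc p (by omega)
      gcongr
    refine h1.trans ?_
    have h2 : ∑ p ∈ range (m + 2), ‖cpow (y i) p - cpow (x i) p‖ ≤ F y :=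
      Finset.single_le_sum
        (f := fun i => ∑ p ∈ range (m + 2), ‖cpow (y i) p - cpow (x i) p‖)
        (fun _ _ => Finset.sum_nonneg fun _ _ => norm_nonneg _) (Finset.mem_univ i)
    gcongr
  have hTl := hT lam fun i => lt_of_lt_of_le ha (hlam i).1
  have hTn := T_pow_norm_le hTl (b := b)
    (fun i => ⟨ha.le.trans (hlam i).1, (hlam i).2⟩) (n + 1)
    (evalP d m c y - evalP d m c x)
  have h2b : (1:ℝ) ≤ 2 ^ b := Real.one_le_rpow (by norm_num) hb.le
  have hpow : ((2:ℝ) ^ b) ^ (n + 1) ≤ ((2:ℝ) ^ b) ^ M := pow_le_pow_right₀ h2b hn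
  have e : ((T lam) ^ (n + 1)) (evalP d m c y) - v
      = ((T lam) ^ (n + 1)) (evalP d m c y - evalP d m c x)
        + (((T lam) ^ (n + 1)) (evalP d m c x) - v) := by
    rw [map_sub]; abel
  rw [e]
  refine (norm_add_le _ _).trans ?_
  have h3 : ‖((T lam) ^ (n + 1)) (evalP d m c y - evalP d m c x)‖ ≤ B * F y := by
    refine hTn.trans ?_
    rw [hB, mul_assoc]
    gcongr
  linarith

lemma exists_poly_close (x : Fin d → lpC 1) {δ : ℝ} (hδ : 0 < δ) :
    ∃ u : Fin d → Polynomial ℂ, ∀ i, ‖x i - iotaP (u i)‖ < δ := by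
  have : ∀ i, ∃ u : Polynomial ℂ, ‖x i - iotaP u‖ < δ := by
    intro i
    obtain ⟨_, ⟨u, rfl⟩, hu⟩ := Metric.mem_closure_iff.1 (iotaP_dense (x i)) δ hδ
    exact ⟨u, by rwa [dist_eq_norm] at hu⟩
  choose u hu using this
  exact ⟨u, hu⟩

lemma goodSet_dense
    (hT : ∀ lam : Fin d → ℝ, (∀ i, 0 < lam i) → IsProductShift 1 d wPow (T lam) lam)
    (m : ℕ) {R a b ε : ℝ} (hR : 0 ≤ R) (ha : 0 < a) (hab : a ≤ b) (hε : 0 < ε)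
    (v : Fin d → lpC 1) :
    Dense (goodSet d T m R a b ε v) := by
  intro x0
  rw [Metric.mem_closure_iff]
  intro δ hδ
  obtain ⟨u, hu⟩ := exists_poly_close x0 (δ := δ / 4) (by positivity)
  obtain ⟨v', hv'⟩ := exists_poly_close v (δ := ε / 4) (by positivity)
  obtain ⟨x, M, hxu, hx⟩ := core d m a b R (min (δ / 4) (ε / 4)) ha hab hR
    (lt_min (by positivity) (by positivity)) u v'
  refine ⟨fun i => iotaP (x i), ?_, ?_⟩
  · refine ⟨M, ε / 2, by linarith, fun lam hlam c hc hc1 => ?_⟩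
    obtain ⟨n, hn, hnx⟩ := hx lam hlam c hc hc1
    refine ⟨n, hn, (pi_norm_le_iff_of_nonneg (by positivity)).2 fun i => ?_⟩
    have hTl := hT lam fun i => lt_of_lt_of_le ha (hlam i).1
    have key := hnx i (((T lam) ^ (n + 1)) (evalP d m c fun i => iotaP (x i)) i - iotaP (v' i))
      (fun k => by
        have e : evalP d m c (fun i => iotaP (x i)) i
            = iotaP (∑ p ∈ range (m + 2), Polynomial.C (c p) * x i ^ p) := by
          rw [map_sum]
          refine Finset.sum_congr rfl fun p _ => ?_
          rw [cpow_iotaP, ← Polynomial.smul_eq_C_mul, map_smul]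
        rw [lp.coeFn_sub, Pi.sub_apply, T_pow_apply hTl, e, iotaP_apply, iotaP_apply])
    have e2 : (((T lam) ^ (n + 1)) (evalP d m c fun i => iotaP (x i)) - v) i
        = (((T lam) ^ (n + 1)) (evalP d m c fun i => iotaP (x i)) i - iotaP (v' i))
          - (v i - iotaP (v' i)) := by
      rw [Pi.sub_apply]; abel
    rw [e2]
    refine (norm_sub_le _ _).trans ?_
    have := hv' i
    have := key.trans (min_le_right _ _)
    linarith
  · rw [dist_eq_norm]
    refine lt_of_le_of_lt (b := δ / 2) ?_ (by linarith)
    refine (pi_norm_le_iff_of_nonneg (by positivity)).2 fun i => ?_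
    have e : (x0 - fun i => iotaP (x i)) i
        = (x0 i - iotaP (u i)) - (iotaP (x i) - iotaP (u i)) := by
      rw [Pi.sub_apply]; abel
    rw [e]
    refine (norm_sub_le _ _).trans ?_
    have := hu i
    have := (hxu i).trans (min_le_left _ _)
    linarith

/-- existence of a generator: all monic polynomials in `x` are common hypercyclic vectors. -/
lemma exists_generator
    (hT : ∀ lam : Fin d → ℝ, (∀ i, 0 < lam i) → IsProductShift 1 d wPow (T lam) lam) :
    ∃ x : Fin d → lpC 1, ∀ m : ℕ, ∀ c : ℕ → ℂ, c (m + 1) = 1 →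
      ∀ lam : Fin d → ℝ, (∀ i, 0 < lam i) →
      Dense (Set.range fun n : ℕ => ((T lam) ^ (n + 1)) (evalP d m c x)) := by
  have := lp1_separable
  set V := TopologicalSpace.denseSeq (Fin d → lpC 1) with hV
  have hVd : DenseRange V := TopologicalSpace.denseRange_denseSeq _
  have key : Dense (⋂ t : ℕ × ℕ × ℕ, goodSet d T t.1 (t.2.1 : ℝ) (1 / ((t.2.1 : ℝ) + 1))
      ((t.2.1 : ℝ) + 1) (1 / ((t.2.1 : ℝ) + 1)) (V t.2.2)) := by
    have hab : ∀ k : ℕ, 1 / ((k : ℝ) + 1) ≤ (k : ℝ) + 1 := by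
      intro k
      have : (0:ℝ) ≤ k := by positivity
      rw [div_le_iff₀ (by positivity)]
      nlinarith
    refine dense_iInter_of_isOpen (fun t => ?_) (fun t => ?_)
    · exact goodSet_isOpen hT _ (by positivity) (by positivity) (hab _) _
    · exact goodSet_dense hT _ (by positivity) (by positivity) (hab _) (by positivity) _
  obtain ⟨x, hx⟩ := key.nonempty
  rw [Set.mem_iInter] at hx
  refine ⟨x, fun m c hc1 lam hlam z => ?_⟩
  rw [Metric.mem_closure_iff]
  intro ε hε
  obtain ⟨s, hs⟩ := hVd.exists_dist_lt z (ε := ε / 2) (by positivity)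
  -- choose k large
  obtain ⟨k1, hk1⟩ := exists_nat_ge (∑ p ∈ range (m + 2), ‖c p‖)
  obtain ⟨k2, hk2⟩ := exists_nat_ge (∑ i, lam i)
  obtain ⟨k3, hk3⟩ := exists_nat_ge (∑ i, 1 / lam i)
  obtain ⟨k4, hk4⟩ := exists_nat_ge (2 / ε)
  set k := k1 + k2 + k3 + k4 with hk
  have hkr : (k : ℝ) = k1 + k2 + k3 + k4 := by rw [hk]; push_cast; ring
  have n1 : (0:ℝ) ≤ k1 := by positivity
  have n2 : (0:ℝ) ≤ k2 := by positivity
  have n3 : (0:ℝ) ≤ k3 := by positivity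
  have n4 : (0:ℝ) ≤ k4 := by positivity
  obtain ⟨M, ε', hε', h⟩ := hx (m, k, s)
  simp only at hε' h
  obtain ⟨n, -, hn⟩ := h lam (fun i => by
      have h2 : lam i ≤ ∑ i, lam i := Finset.single_le_sum (fun i _ => (hlam i).le)
        (Finset.mem_univ i)
      have h3 : 1 / lam i ≤ ∑ i, 1 / lam i := Finset.single_le_sum (f := fun i => 1 / lam i)
        (fun i _ => (one_div_pos.2 (hlam i)).le) (Finset.mem_univ i)
      constructor
      · rw [one_div_le (by positivity) (hlam i)]
        linarith
      · linarith) c (fun p hp => by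
      have h1 : ‖c p‖ ≤ ∑ p ∈ range (m + 2), ‖c p‖ := Finset.single_le_sum
        (f := fun p => ‖c p‖) (fun _ _ => norm_nonneg _) (Finset.mem_range.2 (by omega))
      linarith) hc1
  refine ⟨_, ⟨n, rfl⟩, ?_⟩
  have h4 : 1 / ((k : ℝ) + 1) ≤ ε / 2 := by
    rw [div_le_iff₀ (by positivity)]
    have h5 : 2 ≤ k4 * ε := (div_le_iff₀ hε).1 hk4
    have : (k4 : ℝ) * ε ≤ k * ε := by gcongr; linarith
    linarith
  have h5 : dist (V s) (((T lam) ^ (n + 1)) (evalP d m c x)) < ε / 2 := by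
    rw [dist_comm, dist_eq_norm]; linarith
  calc dist z _ ≤ dist z (V s) + dist (V s) _ := dist_triangle _ _ _
    _ < ε := by linarith

end Baire

/-- Theorem 1.4 of the paper, for `w 1 (a) ⋯ w n (a) = n ^ a`. -/
theorem stmt_4 (d : ℕ) (hd : 1 ≤ d)
    (T : (Fin d → ℝ) → ((Fin d → lpC 1) →L[ℂ] (Fin d → lpC 1)))
    (hT : ∀ lam : Fin d → ℝ, (∀ i, 0 < lam i) → IsProductShift 1 d wPow (T lam) lam) :
    CommonHypercyclicAlgebraConv d {lam | ∀ i, 0 < lam i} T := by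
  obtain ⟨x, hx⟩ := exists_generator hT
  refine ⟨{y | ∃ P : Polynomial ℂ, P.coeff 0 = 0 ∧
    ∀ i, toPS (y i) = Polynomial.aeval (toPS (x i)) P}, ?_, ?_, ?_, ?_, ?_, ?_⟩
  · exact ⟨0, by simp, fun i => by simp⟩
  · rintro y ⟨P, hP, hy⟩ z ⟨Q, hQ, hz⟩
    exact ⟨P + Q, by simp [hP, hQ], fun i => by simp [hy, hz]⟩
  · rintro t y ⟨P, hP, hy⟩
    exact ⟨t • P, by simp [hP], fun i => by simp [hy]⟩
  · rintro y ⟨P, hP, hy⟩ z ⟨Q, hQ, hz⟩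
    refine ⟨fun i => cconv (y i) (z i), ⟨P * Q, ?_, fun i => ?_⟩, fun i n => cconv_apply _ _ _⟩
    · simp [Polynomial.mul_coeff_zero, hP]
    · rw [toPS_cconv, hy, hz, map_mul]
  · refine ⟨x, ⟨Polynomial.X, by simp, fun i => by simp⟩, ?_⟩
    rintro rfl
    have hden := hx 0 (fun p => if p = 1 then 1 else 0) (by simp) (fun _ => 1) (fun _ => one_pos)
    have he : evalP d 0 (fun p => if p = 1 then 1 else 0) (0 : Fin d → lpC 1) = 0 := by
      funext i
      apply toPS_injective
      simp [evalP, Finset.sum_range_succ, toPS_cpow]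
    rw [he] at hden
    simp only [map_zero, Set.range_const] at hden
    have hcl := hden (fun _ => iotaP 1)
    rw [closure_singleton, Set.mem_singleton_iff] at hcl
    have h1 := congrFun hcl ⟨0, hd⟩
    have h2 := iotaP_norm_one
    simp only [Pi.zero_apply] at h1
    rw [h1, norm_zero] at h2
    exact zero_ne_one h2
  · rintro y ⟨P, hP, hy⟩ hy0 lam hlam
    have hP0 : P ≠ 0 := by
      rintro rfl
      apply hy0
      funext i
      apply toPS_injective
      rw [hy i]; simp
    have hdeg : P.natDegree ≠ 0 := by
      intro h
      apply hP0
      rw [Polynomial.eq_C_of_natDegree_eq_zero h, hP, map_zero]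
    obtain ⟨m, hm⟩ := Nat.exists_eq_succ_of_ne_zero hdeg
    have hl : P.leadingCoeff ≠ 0 := Polynomial.leadingCoeff_ne_zero.2 hP0
    have hlc : P.coeff (m + 1) = P.leadingCoeff := by rw [Polynomial.leadingCoeff, hm]
    set c : ℕ → ℂ := fun p => P.leadingCoeff⁻¹ * P.coeff p with hc
    have hden := hx m c (by simp only [hc]; rw [hlc, inv_mul_cancel₀ hl]) lam hlam
    have hy' : y = P.leadingCoeff • evalP d m c x := by
      funext i
      apply toPS_injective
      rw [hy i, Polynomial.aeval_eq_sum_range, Pi.smul_apply, map_smul, evalP, map_sum, hm,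
        Finset.smul_sum]
      refine Finset.sum_congr rfl fun p _ => ?_
      rw [map_smul, toPS_cpow, smul_smul, hc]
      simp only
      rw [mul_inv_cancel_left₀ hl]
    have hcont : Continuous fun z : Fin d → lpC 1 => P.leadingCoeff • z := continuous_const_smul _
    have hsurj : Function.Surjective fun z : Fin d → lpC 1 => P.leadingCoeff • z := fun z =>
      ⟨P.leadingCoeff⁻¹ • z, by simp [smul_smul, mul_inv_cancel₀ hl]⟩
    have h2 := hsurj.denseRange.dense_image hcont hden
    rw [← Set.range_comp] at h2
    convert h2 using 2
    funext n
    simp [hy', map_smul]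
end
end

section
/- Let d ≥ 1 be an integer, and for each a > 0 let w(a) be the weight sequence w_n(a) = 1 + a/n for n ≥ 1. Then the family (B_{w(λ₁)} × ⋯ × B_{w(λ_d)})_{λ∈(0,∞)^d} admits a common hypercyclic algebra on ℓ1(ℕ)^d for the convolution product. -/
open scoped ENNReal
open Finset

noncomputable section

namespace Aux

lemma summ (f : lpC 1) : Summable (fun n => ‖f n‖) := by
  have := (lp.memℓp f)
  rw [memℓp_gen_iff (by simp)] at this
  simpa using this

lemma norm_eq (f : lpC 1) : ‖f‖ = ∑' n, ‖f n‖ := by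
  rw [lp.norm_eq_tsum_rpow (by simp)]; simp

def mk (f : ℕ → ℂ) (hf : Summable (fun n => ‖f n‖)) : lpC 1 :=
  ⟨f, by
    show Memℓp f 1
    rw [memℓp_gen_iff (by simp)]; simpa using hf⟩

@[simp] lemma mk_apply (f : ℕ → ℂ) (hf) (n : ℕ) : mk f hf n = f n := rfl

def conv (x y : lpC 1) : lpC 1 :=
  mk (fun n => ∑ kl ∈ antidiagonal n, x kl.1 * y kl.2)
    (summable_norm_sum_mul_antidiagonal_of_summable_norm (summ x) (summ y))

lemma conv_apply (x y : lpC 1) (n : ℕ) :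
    conv x y n = ∑ kl ∈ antidiagonal n, x kl.1 * y kl.2 := rfl

def ps (x : lpC 1) : PowerSeries ℂ := PowerSeries.mk (fun n => x n)

lemma coeff_ps (x : lpC 1) (n : ℕ) : PowerSeries.coeff n (ps x) = x n := by simp [ps]

lemma ps_inj {x y : lpC 1} (h : ps x = ps y) : x = y := by
  ext n
  rw [← coeff_ps, h, coeff_ps]

lemma ps_conv (x y : lpC 1) : ps (conv x y) = ps x * ps y := by
  ext n
  rw [coeff_ps, PowerSeries.coeff_mul, conv_apply]
  simp [coeff_ps]

lemma ps_add (x y : lpC 1) : ps (x + y) = ps x + ps y := by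
  ext n
  simp [coeff_ps]

lemma ps_zero : ps 0 = 0 := by
  ext n
  simp [coeff_ps]

lemma ps_smul (c : ℂ) (x : lpC 1) : ps (c • x) = c • ps x := by
  ext n
  simp [coeff_ps]

def mono (a : ℕ) : lpC 1 := mk (fun n => if n = a then 1 else 0) (by
  apply summable_of_ne_finset_zero (s := {a})
  intro b hb
  simp at hb
  simp [hb])

lemma mono_apply (a n : ℕ) : mono a n = if n = a then 1 else 0 := rfl

lemma ps_mono (a : ℕ) : ps (mono a) = PowerSeries.X ^ a := by
  ext n
  simp [coeff_ps, mono_apply, PowerSeries.coeff_X_pow]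

lemma norm_mono (a : ℕ) : ‖mono a‖ = 1 := by
  rw [norm_eq, tsum_eq_single a]
  · simp [mono_apply]
  · intro b hb
    simp [mono_apply, hb]

lemma norm_conv_le (x y : lpC 1) : ‖conv x y‖ ≤ ‖x‖ * ‖y‖ := by
  rw [norm_eq, norm_eq, norm_eq,
    tsum_mul_tsum_eq_tsum_sum_antidiagonal_of_summable_norm (by simpa using summ x)
      (by simpa using summ y)]
  refine Summable.tsum_le_tsum (fun n => ?_) (summ _) ?_
  · rw [conv_apply]
    refine (norm_sum_le _ _).trans (le_of_eq ?_)
    simp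
  · have := summable_norm_sum_mul_antidiagonal_of_summable_norm
      (f := fun n => ‖x n‖) (g := fun n => ‖y n‖)
      (by simpa using summ x) (by simpa using summ y)
    exact this.of_norm

scoped instance instRing : NormedCommRing (lpC 1) :=
  { (inferInstance : NormedAddCommGroup (lpC 1)) with
    mul := conv
    one := mono 0
    mul_assoc := fun a b c => ps_inj (by
      show ps (conv (conv a b) c) = ps (conv a (conv b c))
      simp only [ps_conv, mul_assoc])
    mul_comm := fun a b => ps_inj (by
      show ps (conv a b) = ps (conv b a)
      simp only [ps_conv, mul_comm])
    one_mul := fun a => ps_inj (by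
      show ps (conv (mono 0) a) = ps a
      simp [ps_conv, ps_mono])
    mul_one := fun a => ps_inj (by
      show ps (conv a (mono 0)) = ps a
      simp [ps_conv, ps_mono])
    zero_mul := fun a => ps_inj (by
      show ps (conv 0 a) = ps 0
      simp [ps_conv, ps_zero])
    mul_zero := fun a => ps_inj (by
      show ps (conv a 0) = ps 0
      simp [ps_conv, ps_zero])
    left_distrib := fun a b c => ps_inj (by
      show ps (conv a (b + c)) = ps (conv a b + conv a c)
      simp only [ps_conv, ps_add, mul_add])
    right_distrib := fun a b c => ps_inj (by
      show ps (conv (a + b) c) = ps (conv a c + conv b c)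
      simp only [ps_conv, ps_add, add_mul])
    norm_mul_le := norm_conv_le }

lemma mul_eq (x y : lpC 1) : x * y = conv x y := rfl

lemma mul_apply (x y : lpC 1) (n : ℕ) :
    (x * y) n = ∑ kl ∈ antidiagonal n, x kl.1 * y kl.2 := rfl

scoped instance instNormOne : NormOneClass (lpC 1) := ⟨norm_mono 0⟩

scoped instance instAlg : Algebra ℂ (lpC 1) := Algebra.ofModule
  (fun r x y => ps_inj (by
    show ps (conv (r • x) y) = ps (r • conv x y)
    simp only [ps_conv, ps_smul, smul_mul_assoc]))
  (fun r x y => ps_inj (by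
    show ps (conv x (r • y)) = ps (r • conv x y)
    simp only [ps_conv, ps_smul, mul_smul_comm]))

lemma mono_mul_apply_add (a k : ℕ) (f : lpC 1) : (mono a * f) (k + a) = f k := by
  rw [← coeff_ps, mul_eq, ps_conv, ps_mono, PowerSeries.coeff_X_pow_mul, coeff_ps]

lemma mono_mul_apply_lt (a k : ℕ) (h : k < a) (f : lpC 1) : (mono a * f) k = 0 := by
  rw [← coeff_ps, mul_eq, ps_conv, ps_mono, PowerSeries.coeff_X_pow_mul', if_neg (by omega)]

lemma mono_add (a b : ℕ) : mono (a + b) = mono a * mono b := by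
  apply ps_inj
  rw [mul_eq, ps_conv, ps_mono, ps_mono, ps_mono, pow_add]

lemma mono_zero : mono 0 = 1 := rfl

lemma mono_pow (a m : ℕ) : mono a ^ m = mono (m * a) := by
  induction m with
  | zero => simp [mono_zero]
  | succ m ih => rw [pow_succ, ih, ← mono_add]; congr 1; ring

lemma norm_mono_mul_le (a : ℕ) (f : lpC 1) : ‖mono a * f‖ ≤ ‖f‖ := by
  refine (norm_mul_le _ _).trans ?_
  rw [norm_mono, one_mul]

/-- support bounded above by `D` -/
def Dg (f : lpC 1) (D : ℕ) : Prop := ∀ n, D < n → f n = 0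
/-- support bounded below by `D` -/
def Od (f : lpC 1) (D : ℕ) : Prop := ∀ n, n < D → f n = 0

lemma Dg.weak {f D E} (h : Dg f D) (hh : D ≤ E) : Dg f E := fun n hn => h n (by omega)
lemma Od.weak {f D E} (h : Od f D) (hh : E ≤ D) : Od f E := fun n hn => h n (by omega)
lemma Dg.add {f g D} (h : Dg f D) (h' : Dg g D) : Dg (f + g) D := fun n hn => by
  simp [h n hn, h' n hn]
lemma Od.add {f g D} (h : Od f D) (h' : Od g D) : Od (f + g) D := fun n hn => by
  simp [h n hn, h' n hn]
lemma Dg.smul {f D} (c : ℂ) (h : Dg f D) : Dg (c • f) D := fun n hn => by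
  simp [h n hn]
lemma Od.smul {f D} (c : ℂ) (h : Od f D) : Od (c • f) D := fun n hn => by
  simp [h n hn]
lemma Dg.mul {f g D E} (h : Dg f D) (h' : Dg g E) : Dg (f * g) (D + E) := fun n hn => by
  rw [mul_apply]
  refine sum_eq_zero fun kl hkl => ?_
  rw [HasAntidiagonal.mem_antidiagonal] at hkl
  by_cases h1 : D < kl.1
  · rw [h _ h1, zero_mul]
  · rw [h' _ (by omega), mul_zero]
lemma Od.mul {f g D E} (h : Od f D) (h' : Od g E) : Od (f * g) (D + E) := fun n hn => by
  rw [mul_apply]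
  refine sum_eq_zero fun kl hkl => ?_
  rw [HasAntidiagonal.mem_antidiagonal] at hkl
  by_cases h1 : kl.1 < D
  · rw [h _ h1, zero_mul]
  · rw [h' _ (by omega), mul_zero]
lemma Dg.sum {ι : Type*} {s : Finset ι} {f : ι → lpC 1} {D} (h : ∀ i ∈ s, Dg (f i) D) :
    Dg (∑ i ∈ s, f i) D := by
  classical
  induction s using Finset.induction_on with
  | empty => intro n _; simp
  | insert a s ha ih =>
    rw [sum_insert ha]
    exact (h a (by simp)).add (ih fun i hi => h i (by simp [hi]))
lemma Od.sum {ι : Type*} {s : Finset ι} {f : ι → lpC 1} {D} (h : ∀ i ∈ s, Od (f i) D) :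
    Od (∑ i ∈ s, f i) D := by
  classical
  induction s using Finset.induction_on with
  | empty => intro n _; simp
  | insert a s ha ih =>
    rw [sum_insert ha]
    exact (h a (by simp)).add (ih fun i hi => h i (by simp [hi]))
lemma dg_mono (a : ℕ) : Dg (mono a) a := fun n hn => by
  rw [mono_apply, if_neg (by omega)]
lemma od_mono (a : ℕ) : Od (mono a) a := fun n hn => by
  rw [mono_apply, if_neg (by omega)]
lemma Dg.pow {f D} (h : Dg f D) (m : ℕ) : Dg (f ^ m) (m * D) := by
  induction m with
  | zero => rw [pow_zero, zero_mul, ← mono_zero]; exact dg_mono 0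
  | succ m ih => rw [pow_succ, add_mul, one_mul]; exact ih.mul h

lemma pow_sub_le (M : ℕ) (a b : lpC 1) (ha : ‖a‖ ≤ 1) (hb : ‖b‖ ≤ 1) :
    ‖a ^ M - b ^ M‖ ≤ M * ‖a - b‖ := by
  induction M with
  | zero => simp
  | succ M ih =>
    have h1 : a ^ (M + 1) - b ^ (M + 1) = a ^ M * (a - b) + (a ^ M - b ^ M) * b := by ring
    rw [h1]
    refine (norm_add_le _ _).trans ?_
    have h2 : ‖a ^ M * (a - b)‖ ≤ ‖a - b‖ := by
      refine (norm_mul_le _ _).trans ?_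
      have : ‖a ^ M‖ ≤ 1 := (norm_pow_le a M).trans (pow_le_one₀ (norm_nonneg _) ha)
      nlinarith [norm_nonneg (a - b)]
    have h3 : ‖(a ^ M - b ^ M) * b‖ ≤ M * ‖a - b‖ := by
      refine (norm_mul_le _ _).trans ?_
      nlinarith [norm_nonneg (a ^ M - b ^ M)]
    push_cast
    linarith

end Aux

namespace Aux

def W (a : ℝ) (k N : ℕ) : ℝ := ∏ l ∈ range N, (1 + a / ((k + l + 1 : ℕ) : ℝ))

lemma tele (k N : ℕ) : ∏ l ∈ range N, (1 + 1 / ((k + l + 1 : ℕ) : ℝ)) = (k + N + 1) / (k + 1) := by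
  induction N with
  | zero => simp; rw [div_self]; positivity
  | succ N ih =>
    rw [prod_range_succ, ih]
    push_cast
    field_simp
    ring

lemma W_pos {a : ℝ} (ha : 0 ≤ a) (k N : ℕ) : 0 < W a k N :=
  prod_pos fun l _ => by positivity

lemma W_le {a : ℝ} (ha : 0 ≤ a) (n : ℕ) (han : a ≤ n) (k N : ℕ) :
    W a k N ≤ (((k : ℝ) + N + 1) / (k + 1)) ^ n := by
  rw [← tele, ← prod_pow]
  refine prod_le_prod (fun l _ => by positivity) fun l _ => ?_
  have := one_add_mul_le_pow (a := 1 / ((k + l + 1 : ℕ) : ℝ))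
    (le_trans (by norm_num) (show (0 : ℝ) ≤ _ by positivity)) n
  refine le_trans ?_ this
  rw [mul_one_div]
  gcongr

lemma W_ge {a : ℝ} (n : ℕ) (hn : 1 ≤ n) (han : 1 / (n : ℝ) ≤ a) (k N : ℕ) :
    ((k : ℝ) + N + 1) / (k + 1) ≤ W a k N ^ n := by
  rw [← tele, W, ← prod_pow]
  refine prod_le_prod (fun l _ => by positivity) fun l _ => ?_
  have hn' : (0 : ℝ) < n := by exact_mod_cast hn
  have ha : 0 ≤ a := le_trans (by positivity) han
  have := one_add_mul_le_pow (a := a / ((k + l + 1 : ℕ) : ℝ))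
    (le_trans (by norm_num) (show (0 : ℝ) ≤ _ by positivity)) n
  refine le_trans ?_ this
  rw [← mul_div_assoc]
  have : 1 ≤ n * a := by
    rw [div_le_iff₀ hn'] at han; linarith
  gcongr

lemma W_ratio {a b : ℝ} (ha : 0 ≤ a) (hb : 0 ≤ b) (k N : ℕ) (hN : 1 ≤ N) :
    |W a k N / W b k N - 1| ≤ Real.exp (|a - b| * (1 + Real.log N)) - 1 := by
  have h1 : W a k N / W b k N =
      ∏ l ∈ range N, (1 + (a - b) / ((k + l + 1 : ℕ) + b)) := by
    rw [W, W, ← prod_div_distrib]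
    refine prod_congr rfl fun l _ => ?_
    have : (0 : ℝ) < (k + l + 1 : ℕ) := by positivity
    field_simp
    ring
  rw [h1]
  have h2 := Finset.norm_prod_one_add_sub_one_le (range N)
    (fun l => (a - b) / (((k + l + 1 : ℕ) : ℝ) + b))
  rw [Real.norm_eq_abs] at h2
  refine h2.trans ?_
  gcongr
  have h3 := harmonic_le_one_add_log N
  refine le_trans ?_ (mul_le_mul_of_nonneg_left h3 (abs_nonneg _))
  rw [harmonic]
  push_cast
  rw [mul_sum]
  refine sum_le_sum fun l _ => ?_
  rw [Real.norm_eq_abs, abs_div, div_eq_mul_inv]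
  gcongr
  rw [abs_of_nonneg (by positivity)]
  push_cast
  linarith [(Nat.cast_nonneg k : (0 : ℝ) ≤ k)]

/-- splitting estimate -/
lemma split_est {a b : ℝ} (ha : 0 ≤ a) (hb : 0 ≤ b) (n : ℕ) (han : a ≤ n) (N g : ℕ) (hN : 1 ≤ N)
    (hg : 1 ≤ g) (f f1 f2 V v : lpC 1) (hf : f = f1 + mono N * V + f2)
    (h1 : ∀ k, N ≤ k → f1 k = 0) (h2 : Od f2 (N + g))
    (hV : ∀ k, V k = v k / (W b k N : ℂ)) :
    Summable (fun k => ‖(W a k N : ℂ) * f (k + N) - v k‖) ∧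
    ∑' k, ‖(W a k N : ℂ) * f (k + N) - v k‖ ≤
      (Real.exp (|a - b| * (1 + Real.log N)) - 1) * ‖v‖ + (1 + (N : ℝ) / g) ^ n * ‖f2‖ := by
  have key : ∀ k, ‖(W a k N : ℂ) * f (k + N) - v k‖ ≤
      (Real.exp (|a - b| * (1 + Real.log N)) - 1) * ‖v k‖ +
        (1 + (N : ℝ) / g) ^ n * ‖f2 (k + N)‖ := by
    intro k
    have e1 : f (k + N) = V k + f2 (k + N) := by
      rw [hf]
      have : (f1 + mono N * V + f2) (k + N) = f1 (k + N) + (mono N * V) (k + N) + f2 (k + N) := rfl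
      rw [this, h1 _ (by omega), mono_mul_apply_add, zero_add]
    have e2 : (W a k N : ℂ) * f (k + N) - v k =
        ((W a k N / W b k N - 1 : ℝ) : ℂ) * v k + (W a k N : ℂ) * f2 (k + N) := by
      rw [e1, hV]
      push_cast
      ring
    rw [e2]
    refine (norm_add_le _ _).trans (add_le_add ?_ ?_)
    · rw [norm_mul, Complex.norm_real, Real.norm_eq_abs]
      gcongr
      exact W_ratio ha hb k N hN
    · rcases lt_or_ge k g with hk | hk
      · rw [h2 _ (by omega)]; simp
      · rw [norm_mul, Complex.norm_real, Real.norm_eq_abs, abs_of_pos (W_pos ha k N)]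
        gcongr
        refine (W_le ha n han k N).trans ?_
        gcongr
        have : ((k : ℝ) + N + 1) / (k + 1) = 1 + N / (k + 1) := by
          field_simp
          ring
        rw [this]
        have : (0 : ℝ) < g := by exact_mod_cast hg
        have : (g : ℝ) ≤ k := by exact_mod_cast hk
        gcongr
        linarith
  have s2 : Summable (fun k => ‖f2 (k + N)‖) := (summable_nat_add_iff N).2 (summ f2)
  have s3 := ((summ v).mul_left (Real.exp (|a - b| * (1 + Real.log N)) - 1)).add
    (s2.mul_left ((1 + (N : ℝ) / g) ^ n))
  have s4 := Summable.of_nonneg_of_le (fun k => norm_nonneg _) key s3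
  refine ⟨s4, (Summable.tsum_le_tsum key s4 s3).trans ?_⟩
  rw [Summable.tsum_add ((summ v).mul_left _) (s2.mul_left _), tsum_mul_left, tsum_mul_left,
    ← norm_eq]
  gcongr
  rw [norm_eq]
  exact tsum_comp_le_tsum_of_inj (summ f2) (fun _ => norm_nonneg _) (add_left_injective N)

end Aux

namespace Aux

/-- positions of the blocks -/
def Npos (M J g j : ℕ) : ℕ := M * (4 * M * J * g) + (2 * J + j) * g

lemma norm_V_le {b : ℝ} (n : ℕ) (hn : 1 ≤ n) (hb : 1 / (n : ℝ) ≤ b) (p N : ℕ) (Q : ℝ) (hQ : 0 < Q)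
    (hNQ : (p + 1 : ℝ) * Q ^ n ≤ N) (v : lpC 1) (hv : Dg v p) :
    ∃ V : lpC 1, (∀ k, V k = v k / (W b k N : ℂ)) ∧ Dg V p ∧ ‖V‖ ≤ ‖v‖ / Q := by
  have hb0 : 0 ≤ b := le_trans (by positivity) hb
  have key : ∀ k, ‖v k / (W b k N : ℂ)‖ ≤ ‖v k‖ / Q := by
    intro k
    rcases lt_or_ge p k with hk | hk
    · rw [hv k hk]; simp
    · rw [norm_div, Complex.norm_real, Real.norm_eq_abs, abs_of_pos (W_pos hb0 k N)]
      gcongr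
      refine le_of_pow_le_pow_left₀ (n := n) (by omega) (W_pos hb0 k N).le ?_
      refine le_trans ?_ (W_ge n hn hb k N)
      rw [le_div_iff₀ (by positivity)]
      have h1 : (k : ℝ) ≤ p := by exact_mod_cast hk
      have h2 : 0 < Q ^ n := by positivity
      have h3 : (0 : ℝ) ≤ k := by positivity
      nlinarith
  have s : Summable fun k => ‖v k / (W b k N : ℂ)‖ :=
    Summable.of_nonneg_of_le (fun k => norm_nonneg _) key ((summ v).div_const Q)
  refine ⟨mk _ s, fun k => rfl, fun k hk => ?_, ?_⟩
  · rw [mk_apply, hv k hk, zero_div]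
  · rw [norm_eq, norm_eq, ← tsum_div_const]
    exact Summable.tsum_le_tsum key s ((summ v).div_const Q)

lemma construct (u0 v : lpC 1) (p M' n J g : ℕ) (hn : 1 ≤ n) (hJ : 1 ≤ J) (hg : p + 1 ≤ g)
    (hu0 : Dg u0 p) (hv : Dg v p) (ε Q : ℝ) (hε : 0 < ε) (hε2 : ε ≤ 1 / 2) (hQ : 0 < Q)
    (hgQ : (p + 1 : ℝ) * Q ^ n ≤ g) (hη : J * (‖v‖ / Q) / ε ^ M' ≤ ε)
    (μ : ℕ → ℝ) (hμ : ∀ j, 1 / (n : ℝ) ≤ μ j) :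
    ∃ u : lpC 1, ‖u - u0‖ ≤ 2 * ε ∧
      (∀ m, m ≤ M' → ∀ k, Npos (M' + 1) J g 0 ≤ k → (u ^ m) k = 0) ∧
      ∀ j, j < J → ∀ a : ℝ, 0 ≤ a → a ≤ n →
      Summable (fun k => ‖(W a k (Npos (M' + 1) J g j) : ℂ) *
        (u ^ (M' + 1)) (k + Npos (M' + 1) J g j) - v k‖) ∧
      ∑' k, ‖(W a k (Npos (M' + 1) J g j) : ℂ) *
        (u ^ (M' + 1)) (k + Npos (M' + 1) J g j) - v k‖ ≤
      (Real.exp (|a - μ j| * (1 + Real.log (Npos (M' + 1) J g j))) - 1) * ‖v‖ +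
      (1 + (Npos (M' + 1) J g j : ℝ) / g) ^ n *
        (J * (‖v‖ / Q) + 2 * (J * (‖v‖ / Q) / ε ^ M')) := by
  set M := M' + 1 with hM
  have hJg : g ≤ J * g := Nat.le_mul_of_pos_left g hJ
  have hNge : ∀ j, g ≤ Npos M J g j := by
    intro j
    unfold Npos
    have : g ≤ (2 * J + j) * g := Nat.le_mul_of_pos_left g (by omega)
    omega
  have hVex : ∀ j, ∃ V : lpC 1, (∀ k, V k = v k / (W (μ j) k (Npos M J g j) : ℂ)) ∧ Dg V p ∧
      ‖V‖ ≤ ‖v‖ / Q := fun j => norm_V_le n hn (hμ j) p _ Q hQ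
        (hgQ.trans (by exact_mod_cast hNge j)) v hv
  choose V hV1 hV2 hV3 using hVex
  set s := 4 * M * J * g with hs
  set r : ℕ → ℕ := fun j => (2 * J + j) * g with hr
  have hN : ∀ j, Npos M J g j = M * s + r j := fun j => rfl
  have hr0 : ∀ j, 2 * J * g ≤ r j := fun j => Nat.mul_le_mul_right g (by omega)
  have hr1 : ∀ j, j < J → r j + g ≤ 3 * J * g := fun j hj => by
    have : r j + g = (2 * J + j + 1) * g := by simp only [hr]; ring
    rw [this]
    exact Nat.mul_le_mul_right g (by omega)
  set Y0 : lpC 1 := ∑ j ∈ range J, mono (r j) * V j with hY0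
  have hY0n : ‖Y0‖ ≤ J * (‖v‖ / Q) := by
    refine (norm_sum_le _ _).trans ?_
    refine (sum_le_sum fun j _ => (norm_mono_mul_le _ _).trans (hV3 j)).trans ?_
    simp
  have hY0o : Od Y0 (2 * J * g) := Od.sum fun j _ => by
    have h0 : Od (V j) 0 := fun k hk => by omega
    exact ((od_mono (r j)).mul h0).weak (by have := hr0 j; omega)
  have hY0d : Dg Y0 (4 * J * g) := Dg.sum fun j hj => by
    refine ((dg_mono (r j)).mul (hV2 j)).weak ?_
    have := hr1 j (mem_range.1 hj)
    have : 3 * J * g ≤ 4 * J * g := Nat.mul_le_mul_right g (by omega)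
    omega
  set c : ℂ := ((1 / (M * ε ^ M') : ℝ) : ℂ) with hc
  set Y : lpC 1 := c • Y0 with hY
  have hMpos : (1 : ℝ) ≤ M := by rw [hM]; push_cast; linarith [(Nat.cast_nonneg M' : (0:ℝ) ≤ M')]
  have hMY : M * ‖Y‖ ≤ J * (‖v‖ / Q) / ε ^ M' := by
    rw [hY, norm_smul, hc, Complex.norm_real, Real.norm_eq_abs, abs_of_pos (by positivity)]
    have : (M : ℝ) * (1 / (M * ε ^ M') * ‖Y0‖) = ‖Y0‖ / ε ^ M' := by
      field_simp
    rw [this]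
    gcongr
  have hYn : ‖Y‖ ≤ ε := by nlinarith [norm_nonneg Y]
  set E : lpC 1 := (ε : ℂ) • (1 : lpC 1) with hE
  have hEn : ‖E‖ = ε := by
    rw [hE, norm_smul, norm_one, Complex.norm_real, Real.norm_eq_abs, abs_of_pos hε, mul_one]
  set w : lpC 1 := mono s * (E + Y) with hw
  set u : lpC 1 := u0 + w with hu
  have hEd : Dg E 0 := (dg_mono 0).smul _
  have hwd : Dg w (s + 4 * J * g) :=
    (dg_mono s).mul ((hEd.weak (Nat.zero_le _)).add (hY0d.smul c))
  have h4 : J * g ≤ 4 * J * g := Nat.mul_le_mul_right g (by omega)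
  have hud : Dg u (s + 4 * J * g) := (hu0.weak (by omega)).add hwd
  have hsM : s = M' * (4 * J * g) + 4 * J * g := by rw [hs, hM]; ring
  have hNbig : ∀ j, M' * (s + 4 * J * g) + p < Npos M J g j := by
    intro j
    have h1 : Npos M J g j = M' * s + s + r j := by rw [hN, hM]; ring
    have h2 : M' * (s + 4 * J * g) = M' * s + M' * (4 * J * g) := by ring
    omega
  refine ⟨u, ?_, ?_, ?_⟩
  · have : u - u0 = w := by rw [hu]; abel
    rw [this]
    refine (norm_mono_mul_le _ _).trans ((norm_add_le _ _).trans ?_)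
    rw [hEn]; linarith
  · intro m hm k hk
    refine (hud.pow m) k ?_
    have : m * (s + 4 * J * g) ≤ M' * (s + 4 * J * g) := Nat.mul_le_mul_right _ hm
    have := hNbig 0
    omega
  · intro j hj a ha0 han
    set N := Npos M J g j with hNdef
    -- decomposition
    obtain ⟨K, hK⟩ := Polynomial.powAddExpansion E Y M
    have hM1 : M - 1 = M' := by omega
    set Z : lpC 1 := K * Y ^ 2 with hZ
    have hEM : E ^ M' = ((ε : ℂ) ^ M') • (1 : lpC 1) := by rw [hE, smul_pow, one_pow]
    have hlin : (M : lpC 1) * E ^ (M - 1) * Y = Y0 := by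
      rw [hM1, hEM, hY]
      have : (M : lpC 1) = (M : ℂ) • (1 : lpC 1) := by
        rw [← Algebra.algebraMap_eq_smul_one, map_natCast]
      rw [this, smul_mul_smul_comm, smul_mul_smul_comm, one_mul, one_mul]
      have h1 : (M : ℂ) * (ε : ℂ) ^ M' * c = 1 := by
        rw [hc]
        have hM0 : (M : ℂ) ≠ 0 := by
          rw [hM]; exact_mod_cast Nat.succ_ne_zero M'
        have hε0 : (ε : ℂ) ≠ 0 := by exact_mod_cast hε.ne'
        push_cast
        field_simp
      rw [h1, one_smul]
    have hEY : (E + Y) ^ M = E ^ M + Y0 + Z := by rw [hK, hlin]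
    have hZn : ‖Z‖ ≤ 2 * (J * (‖v‖ / Q) / ε ^ M') := by
      have e1 : Z = ((E + Y) ^ M - E ^ M) - Y0 := by rw [hEY]; abel
      have e2 : ‖(E + Y) ^ M - E ^ M‖ ≤ M * ‖Y‖ := by
        have := pow_sub_le M (E + Y) E ((norm_add_le _ _).trans (by linarith)) (by linarith)
        rwa [add_sub_cancel_left] at this
      have hε1 : ε ^ M' ≤ 1 := pow_le_one₀ hε.le (by linarith)
      have e3 : ‖Y0‖ ≤ J * (‖v‖ / Q) / ε ^ M' := by
        refine hY0n.trans ?_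
        rw [le_div_iff₀ (by positivity)]
        have : 0 ≤ J * (‖v‖ / Q) := by positivity
        nlinarith
      rw [e1]
      refine (norm_sub_le _ _).trans ?_
      linarith
    have hZo : Od Z (4 * J * g) := by
      have hK0 : Od K 0 := fun k hk => by omega
      have : Od (Y ^ 2) (2 * J * g + 2 * J * g) := by
        rw [pow_two]; exact (hY0o.smul c).mul (hY0o.smul c)
      refine (hK0.mul this).weak (le_of_eq (by ring))
    have hwM : w ^ M = mono (M * s) * E ^ M + mono (M * s) * Y0 + mono (M * s) * Z := by
      rw [hw, mul_pow, mono_pow, hEY]; ring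
    have hY0s : mono (M * s) * Y0 =
        ∑ j' ∈ range j, mono (Npos M J g j') * V j' + mono N * V j +
          ∑ j' ∈ Ico (j + 1) J, mono (Npos M J g j') * V j' := by
      have e1 : mono (M * s) * Y0 = ∑ j' ∈ range J, mono (Npos M J g j') * V j' := by
        rw [hY0, mul_sum]
        refine sum_congr rfl fun j' _ => ?_
        rw [hN, mono_add, mul_assoc]
      rw [e1, ← sum_range_succ (fun j' => mono (Npos M J g j') * V j') j,
        sum_range_add_sum_Ico _ (by omega)]
    set f1 : lpC 1 := (u ^ M - w ^ M) + mono (M * s) * E ^ M +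
      ∑ j' ∈ range j, mono (Npos M J g j') * V j' with hf1
    set f2 : lpC 1 := ∑ j' ∈ Ico (j + 1) J, mono (Npos M J g j') * V j' + mono (M * s) * Z with hf2
    have hf : u ^ M = f1 + mono N * V j + f2 := by
      have : u ^ M = (u ^ M - w ^ M) +
          (mono (M * s) * E ^ M + mono (M * s) * Y0 + mono (M * s) * Z) := by
        rw [← hwM]; ring
      refine this.trans ?_
      rw [hY0s, hf1, hf2]
      abel
    have hd1 : Dg (u ^ M - w ^ M) (M' * (s + 4 * J * g) + p) := by
      rw [← geom_sum₂_mul u w M]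
      have : u - w = u0 := by rw [hu]; abel
      rw [this]
      refine Dg.mul (Dg.sum fun i hi => ?_) hu0
      have hi' := mem_range.1 hi
      refine ((hud.pow i).mul (hwd.pow (M - 1 - i))).weak (le_of_eq ?_)
      rw [← add_mul]
      congr 1
      omega
    have hstep : ∀ j', j' < j → Npos M J g j' + g ≤ N := by
      intro j' hj'
      rw [hNdef, hN, hN]
      have : r j' + g ≤ r j := by
        have : r j' + g = (2 * J + j' + 1) * g := by simp only [hr]; ring
        rw [this]; exact Nat.mul_le_mul_right g (by omega)
      omega
    have hf10 : ∀ k, N ≤ k → f1 k = 0 := by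
      have hrj := hr0 j
      have : g ≤ 2 * J * g := hJg.trans (Nat.mul_le_mul_right g (by omega))
      have hd : Dg f1 (N - 1) := by
        refine Dg.add (Dg.add (hd1.weak ?_) ?_) (Dg.sum fun j' hj' => ?_)
        · have := hNbig j
          omega
        · refine ((dg_mono (M * s)).mul (hEd.pow M)).weak ?_
          have := hN j
          omega
        · refine ((dg_mono _).mul (hV2 j')).weak ?_
          have := hstep j' (mem_range.1 hj')
          omega
      intro k hk
      refine hd k ?_
      have := hNge j
      omega
    have hf20 : Od f2 (N + g) := by
      have hO : ∀ f : lpC 1, Od f 0 := fun f k hk => by omega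
      refine Od.add (Od.sum fun j' hj' => ?_) ?_
      · refine ((od_mono _).mul (hO (V j'))).weak ?_
        have hj2 := (mem_Ico.1 hj').1
        rw [hNdef, hN, hN]
        have : r j + g ≤ r j' := by
          have : r j + g = (2 * J + j + 1) * g := by simp only [hr]; ring
          rw [this]; exact Nat.mul_le_mul_right g (by omega)
        omega
      · refine ((od_mono (M * s)).mul hZo).weak ?_
        rw [hNdef, hN]
        have := hr1 j hj
        have : 3 * J * g ≤ 4 * J * g := Nat.mul_le_mul_right g (by omega)
        omega
    have hf2n : ‖f2‖ ≤ J * (‖v‖ / Q) + 2 * (J * (‖v‖ / Q) / ε ^ M') := by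
      refine (norm_add_le _ _).trans (add_le_add ?_ ((norm_mono_mul_le _ _).trans hZn))
      refine (norm_sum_le _ _).trans ?_
      refine (sum_le_sum fun j _ => (norm_mono_mul_le _ _).trans (hV3 j)).trans ?_
      rw [sum_const, nsmul_eq_mul]
      gcongr
      simp only [Nat.card_Ico]
      omega
    have hμ0 : 0 ≤ μ j := le_trans (by positivity) (hμ j)
    have hfin := split_est ha0 hμ0 n han N g (by have := hNge j; omega) (by omega)
      (u ^ M) f1 f2 (V j) v hf hf10 hf20 (hV1 j)
    refine ⟨hfin.1, hfin.2.trans ?_⟩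
    gcongr

end Aux

namespace Aux
open Filter Topology

def gq (p d n q : ℕ) : ℕ := (p + 1) * q ^ (n * (d * (n + 1) + 1))

lemma Npos_le (M J g j : ℕ) (hj : j < J) : Npos M J g j ≤ (4 * M ^ 2 + 3) * (J * g) := by
  unfold Npos
  have : (2 * J + j) * g ≤ (3 * J) * g := Nat.mul_le_mul_right g (by omega)
  calc _ ≤ M * (4 * M * J * g) + 3 * J * g := by omega
    _ = _ := by ring

lemma asym (C : ℝ) (D n : ℕ) (B C2 δ : ℝ) (hδ : 0 < δ) :
    ∀ᶠ q : ℕ in atTop,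
      (Real.exp (((n : ℝ) / q) * (1 + (C + D * Real.log q))) - 1) * B + C2 * (1 / (q : ℝ)) < δ := by
  have h1 : Tendsto (fun q : ℕ => 1 / (q : ℝ)) atTop (𝓝 0) := tendsto_one_div_atTop_nhds_zero_nat
  have h2 : Tendsto (fun q : ℕ => Real.log q / (q : ℝ)) atTop (𝓝 0) := by
    have := (Real.tendsto_pow_log_div_mul_add_atTop 1 0 1 one_ne_zero).comp
      (tendsto_natCast_atTop_atTop (R := ℝ))
    simpa [Function.comp_def] using this
  have h3 : Tendsto (fun q : ℕ => ((n : ℝ) / q) * (1 + (C + D * Real.log q))) atTop (𝓝 0) := by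
    have := (h1.const_mul (n * (1 + C))).add (h2.const_mul ((n : ℝ) * D))
    simp only [mul_zero, add_zero] at this
    refine this.congr fun q => ?_
    ring
  have h4 := (((Real.continuous_exp.tendsto 0).comp h3).sub_const 1).mul_const B
  have h5 := h4.add (h1.const_mul C2)
  simp only [Real.exp_zero, sub_self, zero_mul, mul_zero, add_zero] at h5
  exact h5.eventually (gt_mem_nhds hδ)

lemma coord (u0 v : lpC 1) (p M' n d : ℕ) (hn : 1 ≤ n) 
    (hu0 : Dg u0 p) (hv : Dg v p) (ε δ : ℝ) (hε : 0 < ε) (hδ : 0 < δ) :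
    ∀ᶠ q : ℕ in atTop, ∀ μ : ℕ → ℝ, (∀ j, 1 / (n : ℝ) ≤ μ j) →
    ∃ u : lpC 1, ‖u - u0‖ < ε ∧
      (∀ m, m ≤ M' → ∀ k, Npos (M' + 1) (q ^ d) (gq p d n q) 0 ≤ k → (u ^ m) k = 0) ∧
      ∀ j, j < q ^ d → ∀ a : ℝ, 0 ≤ a → a ≤ n → |a - μ j| ≤ n / q →
      ∑' k, ‖(W a k (Npos (M' + 1) (q ^ d) (gq p d n q) j) : ℂ) *
        (u ^ (M' + 1)) (k + Npos (M' + 1) (q ^ d) (gq p d n q) j) - v k‖ < δ := by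
  set e : ℝ := min (ε / 3) (1 / 2) with he
  have he0 : 0 < e := by positivity
  have he1 : e ≤ 1 / 2 := min_le_right _ _
  have he2 : e ≤ ε / 3 := min_le_left _ _
  set A : ℝ := 4 * ((M' + 1 : ℕ) : ℝ) ^ 2 + 3 with hA
  have hA0 : 0 < A := by positivity
  have hev1 := asym (Real.log (A * (p + 1))) (d + n * (d * (n + 1) + 1)) n ‖v‖
    ((A + 1) ^ n * (‖v‖ + 2 * (‖v‖ / e ^ M'))) δ hδ
  have hev2 := asym 0 0 0 0 (‖v‖ / e ^ M') e he0
  filter_upwards [hev1, hev2, eventually_ge_atTop 1] with q h1 h2 hq μ hμ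
  have hq0 : (1 : ℝ) ≤ q := by exact_mod_cast hq
  set T := d * (n + 1) + 1 with hT
  set J := q ^ d with hJdef
  set g := gq p d n q with hg
  have hJ : 1 ≤ J := Nat.one_le_pow _ _ hq
  have hgp : p + 1 ≤ g := Nat.le_mul_of_pos_right _ (Nat.one_le_pow _ _ hq)
  have hQ : (0 : ℝ) < (q : ℝ) ^ T := by positivity
  have hJQ : (J : ℝ) * (‖v‖ / (q : ℝ) ^ T) = ‖v‖ * (1 / (q : ℝ) ^ (d * n + 1)) := by
    have : (q : ℝ) ^ T = (q : ℝ) ^ d * (q : ℝ) ^ (d * n + 1) := by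
      rw [← pow_add, hT]; congr 1; ring
    rw [this, hJdef]
    push_cast
    field_simp
  have hJQ1 : (J : ℝ) * (‖v‖ / (q : ℝ) ^ T) ≤ ‖v‖ * (1 / (q : ℝ)) := by
    rw [hJQ]
    gcongr
    exact le_self_pow₀ hq0 (by omega)
  obtain ⟨u, hu1, hu2, hu3⟩ := construct u0 v p M' n J g hn hJ hgp hu0 hv e ((q : ℝ) ^ T) he0 he1 hQ
    (by rw [hg, gq, ← pow_mul, mul_comm T n]; push_cast; exact le_rfl)
    (by
      simp at h2
      refine le_trans ?_ h2.le
      refine (div_le_div_of_nonneg_right hJQ1 (by positivity)).trans (le_of_eq ?_)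
      field_simp)
    μ hμ
  refine ⟨u, by linarith, hu2, ?_⟩
  intro j hj a ha0 han haμ
  refine lt_of_le_of_lt (hu3 j hj a ha0 han).2 (lt_of_le_of_lt ?_ h1)
  set N := Npos (M' + 1) J g j with hN
  have hg0 : (0 : ℝ) < g := by
    have : 0 < g := by omega
    exact_mod_cast this
  have hNle : (N : ℝ) ≤ A * (J * g) := by
    have := Npos_le (M' + 1) J g j hj
    rw [hA]
    exact_mod_cast this
  have hN1 : (1 : ℝ) ≤ N := by
    have : 1 ≤ N := by
      rw [hN, Npos]
      have : g ≤ (2 * J + j) * g := Nat.le_mul_of_pos_left g (by omega)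
      omega
    exact_mod_cast this
  have hlog : Real.log N ≤ Real.log (A * (p + 1)) +
      ((d + n * T : ℕ) : ℝ) * Real.log q := by
    refine (Real.log_le_log (by linarith) hNle).trans (le_of_eq ?_)
    rw [← Real.log_pow, ← Real.log_mul (by positivity) (by positivity)]
    congr 1
    rw [hg, gq, hJdef]
    push_cast
    ring
  have hJ1 : (1 : ℝ) ≤ J := by exact_mod_cast hJ
  refine add_le_add ?_ ?_
  · have : 0 ≤ Real.log N := Real.log_nonneg hN1
    gcongr
  · have hb : (1 + (N : ℝ) / g) ^ n ≤ (A + 1) ^ n * (q : ℝ) ^ (d * n) := by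
      rw [pow_mul, ← mul_pow]
      gcongr
      have : (N : ℝ) / g ≤ A * J := by
        rw [div_le_iff₀ hg0]; linarith
      have h5 : ((q : ℝ) ^ d) = J := by rw [hJdef]; push_cast; rfl
      rw [h5]
      nlinarith
    rw [hJQ]
    refine (mul_le_mul_of_nonneg_right hb (by positivity)).trans (le_of_eq ?_)
    rw [pow_succ]
    field_simp

end Aux

namespace Aux
open Filter Topology

lemma trunc (f : lpC 1) (ε : ℝ) (hε : 0 < ε) :
    ∃ P, ∀ p, P ≤ p → ‖f - ∑ k ∈ range p, f k • mono k‖ < ε := by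
  have h := (lp.hasSum_single (p := (1 : ℝ≥0∞)) (by simp) f).tendsto_sum_nat
  have h2 : ∀ k, lp.single 1 k (f k) = f k • mono k := by
    intro k
    ext n
    rw [lp.single_apply]
    by_cases hn : n = k
    · subst hn; simp [mono_apply]
    · simp [mono_apply, hn]
  simp only [h2] at h
  obtain ⟨P, hP⟩ := (Metric.tendsto_atTop.1 h) ε hε
  refine ⟨P, fun p hp => ?_⟩
  rw [← dist_eq_norm, dist_comm]
  exact hP p hp

scoped instance instSep : TopologicalSpace.SeparableSpace (lpC 1) := by
  have h1 : TopologicalSpace.IsSeparable (Set.range mono) := (Set.countable_range _).isSeparable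
  have h2 := (h1.span (R := ℂ)).closure
  rw [← TopologicalSpace.isSeparable_univ_iff]
  refine h2.mono fun f _ => ?_
  rw [Metric.mem_closure_iff]
  intro ε hε
  obtain ⟨P, hP⟩ := trunc f ε hε
  refine ⟨∑ k ∈ range P, f k • mono k, ?_, ?_⟩
  · exact Submodule.sum_mem _ fun k _ => Submodule.smul_mem _ _ (Submodule.subset_span ⟨k, rfl⟩)
  · rw [dist_eq_norm]; exact hP P le_rfl

lemma truncE {d : ℕ} (x y : Fin d → lpC 1) (ε : ℝ) (hε : 0 < ε) :
    ∃ p, ∃ x' y' : Fin d → lpC 1, ‖x - x'‖ < ε ∧ ‖y - y'‖ < ε ∧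
      (∀ i, Dg (x' i) p) ∧ (∀ i, Dg (y' i) p) := by
  choose P hP using fun i => trunc (x i) ε hε
  choose R hR using fun i => trunc (y i) ε hε
  set p := ∑ i, (P i + R i) with hp
  have hle : ∀ i, P i + R i ≤ p := fun i =>
    single_le_sum (f := fun i => P i + R i) (fun _ _ => Nat.zero_le _) (mem_univ i)
  refine ⟨p, fun i => ∑ k ∈ range p, x i k • mono k, fun i => ∑ k ∈ range p, y i k • mono k,
    ?_, ?_, ?_, ?_⟩
  · rw [pi_norm_lt_iff hε]
    exact fun i => hP i p (by have := hle i; omega)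
  · rw [pi_norm_lt_iff hε]
    exact fun i => hR i p (by have := hle i; omega)
  · exact fun i => Dg.sum fun k hk => ((dg_mono k).weak (mem_range.1 hk).le).smul _
  · exact fun i => Dg.sum fun k hk => ((dg_mono k).weak (mem_range.1 hk).le).smul _


lemma T_pow {d : ℕ} (T : (Fin d → ℝ) → ((Fin d → lpC 1) →L[ℂ] (Fin d → lpC 1)))
    (hT : ∀ lam : Fin d → ℝ, (∀ i, 0 < lam i) →
      IsProductShift 1 d (fun a n => 1 + a / (n : ℝ)) (T lam) lam)
    (lam : Fin d → ℝ) (hl : ∀ i, 0 < lam i) (N : ℕ) (x : Fin d → lpC 1) (i : Fin d)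
    (k : ℕ) : (((T lam) ^ N) x) i k = (W (lam i) k N : ℂ) * x i (k + N) := by
  induction N generalizing x with
  | zero => simp [W]
  | succ N ih =>
    have : ((T lam) ^ (N + 1)) x = ((T lam) ^ N) (T lam x) := by
      rw [pow_succ]; rfl
    rw [this, ih, hT lam hl x i (k + N), W, W, prod_range_succ]
    push_cast
    rw [← add_assoc, mul_assoc]

lemma T_norm {d : ℕ} (T : (Fin d → ℝ) → ((Fin d → lpC 1) →L[ℂ] (Fin d → lpC 1)))
    (hT : ∀ lam : Fin d → ℝ, (∀ i, 0 < lam i) →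
      IsProductShift 1 d (fun a n => 1 + a / (n : ℝ)) (T lam) lam)
    (n : ℕ) (lam : Fin d → ℝ) (hl : ∀ i, 0 < lam i) (hl2 : ∀ i, lam i ≤ n)
    (x : Fin d → lpC 1) : ‖T lam x‖ ≤ (1 + n) * ‖x‖ := by
  rw [pi_norm_le_iff_of_nonneg (by positivity)]
  intro i
  refine le_trans ?_ (mul_le_mul_of_nonneg_left (norm_le_pi_norm x i) (by positivity))
  have key : ∀ k, ‖T lam x i k‖ ≤ (1 + n) * ‖x i (k + 1)‖ := by
    intro k
    rw [hT lam hl x i k, norm_mul, Complex.norm_real, Real.norm_eq_abs]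
    have := hl i
    rw [abs_of_nonneg (by positivity)]
    refine mul_le_mul_of_nonneg_right ?_ (norm_nonneg _)
    show 1 + lam i / ((k + 1 : ℕ) : ℝ) ≤ 1 + n
    refine add_le_add le_rfl ?_
    rw [div_le_iff₀ (by positivity)]
    push_cast
    have := hl2 i
    nlinarith [(Nat.cast_nonneg k : (0 : ℝ) ≤ k), (Nat.cast_nonneg n : (0 : ℝ) ≤ n)]
  have s2 : Summable (fun k => ‖x i (k + 1)‖) := (summable_nat_add_iff 1).2 (summ (x i))
  rw [norm_eq, norm_eq]
  refine (Summable.tsum_le_tsum key (summ _) (s2.mul_left _)).trans ?_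
  rw [tsum_mul_left]
  refine mul_le_mul_of_nonneg_left ?_ (by positivity)
  exact tsum_comp_le_tsum_of_inj (summ (x i)) (fun _ => norm_nonneg _) (add_left_injective 1)

lemma T_pow_norm {d : ℕ} (T : (Fin d → ℝ) → ((Fin d → lpC 1) →L[ℂ] (Fin d → lpC 1)))
    (hT : ∀ lam : Fin d → ℝ, (∀ i, 0 < lam i) →
      IsProductShift 1 d (fun a n => 1 + a / (n : ℝ)) (T lam) lam)
    (n : ℕ) (lam : Fin d → ℝ) (hl : ∀ i, 0 < lam i) (hl2 : ∀ i, lam i ≤ n)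
    (N : ℕ) (x : Fin d → lpC 1) : ‖((T lam) ^ N) x‖ ≤ (1 + n) ^ N * ‖x‖ := by
  induction N generalizing x with
  | zero => simp
  | succ N ih =>
    have : ((T lam) ^ (N + 1)) x = ((T lam) ^ N) (T lam x) := by
      rw [pow_succ]; rfl
    rw [this, pow_succ, mul_assoc]
    refine (ih _).trans ?_
    gcongr
    exact T_norm T hT n lam hl hl2 x

/-- monic polynomial in `u` -/
def poly {d : ℕ} (M' : ℕ) (c : ℕ → ℂ) (u : Fin d → lpC 1) : Fin d → lpC 1 :=
  u ^ (M' + 1) + ∑ m ∈ range (M' + 1), c m • u ^ m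

def Good {d : ℕ} (T : (Fin d → ℝ) → ((Fin d → lpC 1) →L[ℂ] (Fin d → lpC 1)))
    (M' n : ℕ) (v : Fin d → lpC 1) (δ : ℝ) (u : Fin d → lpC 1) : Prop :=
  ∃ Nm : ℕ, ∀ lam : Fin d → ℝ, (∀ i, 1 / (n : ℝ) ≤ lam i) → (∀ i, lam i ≤ n) →
    ∀ c : ℕ → ℂ, (∀ m ∈ range (M' + 1), ‖c m‖ ≤ n) →
    ∃ N, N < Nm ∧ ‖((T lam) ^ (N + 1)) (poly M' c u) - v‖ < δ

lemma good_open {d : ℕ} (T : (Fin d → ℝ) → ((Fin d → lpC 1) →L[ℂ] (Fin d → lpC 1)))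
    (hT : ∀ lam : Fin d → ℝ, (∀ i, 0 < lam i) →
      IsProductShift 1 d (fun a n => 1 + a / (n : ℝ)) (T lam) lam)
    (M' n : ℕ) (hn : 1 ≤ n) (v : Fin d → lpC 1) (δ : ℝ) (hδ : 0 < δ)
    (w : Fin d → lpC 1) (hw : Good T M' n v (δ / 2) w) : ∀ᶠ u in 𝓝 w, Good T M' n v δ u := by
  obtain ⟨Nm, h⟩ := hw
  have hcont : Continuous (fun u : Fin d → lpC 1 => (1 + (n : ℝ)) ^ Nm *
      (‖u ^ (M' + 1) - w ^ (M' + 1)‖ + ∑ m ∈ range (M' + 1), (n : ℝ) * ‖u ^ m - w ^ m‖)) := by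
    fun_prop
  have ht := hcont.tendsto w
  simp only [sub_self, norm_zero, mul_zero, sum_const_zero, add_zero] at ht
  have hev := ht.eventually (gt_mem_nhds (half_pos hδ))
  filter_upwards [hev] with u hu
  refine ⟨Nm, fun lam h1 h2 c hc => ?_⟩
  obtain ⟨N, hN, hNb⟩ := h lam h1 h2 c hc
  refine ⟨N, hN, ?_⟩
  have hn0 : (0 : ℝ) < n := by exact_mod_cast hn
  have hl : ∀ i, 0 < lam i := fun i => lt_of_lt_of_le (by positivity) (h1 i)
  have e1 : ((T lam) ^ (N + 1)) (poly M' c u) - v =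
      ((T lam) ^ (N + 1)) (poly M' c u - poly M' c w) +
        (((T lam) ^ (N + 1)) (poly M' c w) - v) := by
    rw [map_sub]; abel
  rw [e1]
  refine lt_of_le_of_lt (norm_add_le _ _) ?_
  have e2 := T_pow_norm T hT n lam hl h2 (N + 1) (poly M' c u - poly M' c w)
  have e3 : ‖poly M' c u - poly M' c w‖ ≤ ‖u ^ (M' + 1) - w ^ (M' + 1)‖ +
      ∑ m ∈ range (M' + 1), (n : ℝ) * ‖u ^ m - w ^ m‖ := by
    have : poly M' c u - poly M' c w = (u ^ (M' + 1) - w ^ (M' + 1)) +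
        ∑ m ∈ range (M' + 1), c m • (u ^ m - w ^ m) := by
      simp only [poly, smul_sub, sum_sub_distrib]; abel
    rw [this]
    refine (norm_add_le _ _).trans (add_le_add le_rfl ((norm_sum_le _ _).trans ?_))
    refine sum_le_sum fun m hm => ?_
    rw [norm_smul]
    gcongr
    exact hc m hm
  have e4 : (1 + (n : ℝ)) ^ (N + 1) ≤ (1 + (n : ℝ)) ^ Nm :=
    pow_le_pow_right₀ (by linarith) (by omega)
  have e5 := mul_le_mul e4 e3 (norm_nonneg _) (by positivity)
  linarith

lemma grid (n q : ℕ) (hn : 1 ≤ n) (hq : 1 ≤ q) (a : ℝ) (h1 : 1 / (n : ℝ) ≤ a) (h2 : a ≤ n) :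
    ∃ t : Fin q, |a - (1 / (n : ℝ) + n * ((t : ℕ) : ℝ) / q)| ≤ n / q := by
  have hn0 : (0 : ℝ) < n := by exact_mod_cast hn
  have hq0 : (0 : ℝ) < q := by exact_mod_cast hq
  have h3 : (0 : ℝ) < 1 / n := by positivity
  set x := (a - 1 / n) * q / n with hx
  have hx0 : 0 ≤ x := div_nonneg (mul_nonneg (by linarith) hq0.le) hn0.le
  have hxq : x < q := by
    rw [hx, div_lt_iff₀ hn0]
    nlinarith
  refine ⟨⟨⌊x⌋₊, (Nat.floor_lt hx0).2 hxq⟩, ?_⟩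
  have e : a - (1 / (n : ℝ) + n * (⌊x⌋₊ : ℝ) / q) = (x - ⌊x⌋₊) * (n / q) := by
    rw [hx]; field_simp; ring
  simp only [e]
  have := Nat.floor_le hx0
  have := Nat.lt_floor_add_one x
  rw [abs_of_nonneg (mul_nonneg (by linarith) (by positivity))]
  have : (0 : ℝ) < n / q := by positivity
  nlinarith

lemma good_dense {d : ℕ} (T : (Fin d → ℝ) → ((Fin d → lpC 1) →L[ℂ] (Fin d → lpC 1)))
    (hT : ∀ lam : Fin d → ℝ, (∀ i, 0 < lam i) →
      IsProductShift 1 d (fun a n => 1 + a / (n : ℝ)) (T lam) lam)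
    (M' n : ℕ) (hn : 1 ≤ n) (v : Fin d → lpC 1) (δ : ℝ) (hδ : 0 < δ)
    (x0 : Fin d → lpC 1) (ε : ℝ) (hε : 0 < ε) : ∃ w, ‖w - x0‖ < ε ∧ Good T M' n v δ w := by
  obtain ⟨p, u0, v', hu0, hv', hu0d, hvd⟩ := truncE x0 v (min (ε / 2) (δ / 2)) (by positivity)
  have hall : ∀ᶠ q : ℕ in atTop, ∀ i : Fin d, _ := eventually_all.2 fun i =>
    coord (u0 i) (v' i) p M' n d hn (hu0d i) (hvd i) (ε / 2) (δ / 2) (by positivity) (by positivity)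
  obtain ⟨q, hq, hq1⟩ := (hall.and (eventually_ge_atTop 1)).exists
  have hn0 : (0 : ℝ) < n := by exact_mod_cast hn
  have hq0 : (0 : ℝ) < q := by exact_mod_cast hq1
  let μ : Fin d → ℕ → ℝ := fun i j => if h : j < q ^ d then
    1 / (n : ℝ) + n * (((finFunctionFinEquiv.symm (⟨j, h⟩ : Fin (q ^ d)) : Fin d → Fin q) i : ℕ) : ℝ)
      / q else 1 / n
  have hμ : ∀ i j, 1 / (n : ℝ) ≤ μ i j := by
    intro i j
    simp only [μ]
    split_ifs with h
    · have : 0 ≤ n * (((finFunctionFinEquiv.symm (⟨j, h⟩ : Fin (q ^ d)) : Fin d → Fin q) i : ℕ) : ℝ)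
        / q := by positivity
      linarith
    · exact le_rfl
  choose u hu1 hu2 hu3 using fun i => hq i (μ i) (hμ i)
  refine ⟨u, ?_, ?_⟩
  · have e1 : ‖u - u0‖ < ε / 2 := by
      rw [pi_norm_lt_iff (by positivity)]; exact hu1
    have e2 : ‖u0 - x0‖ < ε / 2 := by
      rw [norm_sub_rev]; exact lt_of_lt_of_le hu0 (min_le_left _ _)
    have : u - x0 = (u - u0) + (u0 - x0) := by abel
    rw [this]
    exact lt_of_le_of_lt (norm_add_le _ _) (by linarith)
  · set J := q ^ d
    set g := gq p d n q
    refine ⟨(4 * (M' + 1) ^ 2 + 3) * (J * g), fun lam h1 h2 c hc => ?_⟩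
    choose t ht using fun i => grid n q hn hq1 (lam i) (h1 i) (h2 i)
    set j := finFunctionFinEquiv t with hj
    have hJ1 : 1 ≤ J := Nat.one_le_pow _ _ hq1
    have hg1 : 1 ≤ g := Nat.mul_pos (by omega) (Nat.one_le_pow _ _ hq1)
    have hNpos : 1 ≤ Npos (M' + 1) J g j := by
      rw [Npos]
      have : g ≤ (2 * J + j) * g := Nat.le_mul_of_pos_left g (by omega)
      omega
    have hNle := Npos_le (M' + 1) J g j j.2
    refine ⟨Npos (M' + 1) J g j - 1, by omega, ?_⟩
    rw [Nat.sub_add_cancel hNpos]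
    have hl : ∀ i, 0 < lam i := fun i => lt_of_lt_of_le (by positivity) (h1 i)
    have e1 : ‖((T lam) ^ (Npos (M' + 1) J g j)) (poly M' c u) - v'‖ < δ / 2 := by
      rw [pi_norm_lt_iff (by positivity)]
      intro i
      have hμj : μ i j = 1 / (n : ℝ) + n * ((t i : ℕ) : ℝ) / q := by
        simp only [μ]
        rw [dif_pos j.2]
        show 1 / (n : ℝ) + n * ((finFunctionFinEquiv.symm j i : ℕ) : ℝ) / q = _
        rw [hj, Equiv.symm_apply_apply]
      have := hu3 i j j.2 (lam i) (hl i).le (h2 i) (by rw [hμj]; exact ht i)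
      refine lt_of_le_of_lt (le_of_eq ?_) this
      rw [norm_eq]
      refine tsum_congr fun k => ?_
      have e2 : (((T lam) ^ (Npos (M' + 1) J g j)) (poly M' c u) - v') i k =
        (((T lam) ^ (Npos (M' + 1) J g j)) (poly M' c u)) i k - v' i k := rfl
      rw [e2, T_pow T hT lam hl]
      have hmono : Npos (M' + 1) J g 0 ≤ Npos (M' + 1) J g j := by
        unfold Npos
        have : (2 * J + 0) * g ≤ (2 * J + j) * g := Nat.mul_le_mul_right g (by omega)
        omega
      have e3 : (poly M' c u) i (k + Npos (M' + 1) J g j) =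
          (u i ^ (M' + 1)) (k + Npos (M' + 1) J g j) := by
        have : (poly M' c u) i = u i ^ (M' + 1) + ∑ m ∈ range (M' + 1), c m • u i ^ m := by
          simp [poly]
        rw [this]
        have h0 : (∑ m ∈ range (M' + 1), c m • u i ^ m : lpC 1) (k + Npos (M' + 1) J g j) = 0 := by
          rw [lp.coeFn_sum, Finset.sum_apply]
          refine sum_eq_zero fun m hm => ?_
          rw [lp.coeFn_smul, Pi.smul_apply, hu2 i m (by have := mem_range.1 hm; omega) _ (by omega),
            smul_zero]
        rw [lp.coeFn_add, Pi.add_apply, h0, add_zero]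
      rw [e3]
    have e2 : ‖v' - v‖ < δ / 2 := by
      rw [norm_sub_rev]; exact lt_of_lt_of_le hv' (min_le_right _ _)
    have : ((T lam) ^ (Npos (M' + 1) J g j)) (poly M' c u) - v =
      (((T lam) ^ (Npos (M' + 1) J g j)) (poly M' c u) - v') + (v' - v) := by abel
    rw [this]
    exact lt_of_le_of_lt (norm_add_le _ _) (by linarith)

lemma exists_good {d : ℕ} (T : (Fin d → ℝ) → ((Fin d → lpC 1) →L[ℂ] (Fin d → lpC 1)))
    (hT : ∀ lam : Fin d → ℝ, (∀ i, 0 < lam i) →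
      IsProductShift 1 d (fun a n => 1 + a / (n : ℝ)) (T lam) lam)
    : ∃ u : Fin d → lpC 1, ∀ M' n k : ℕ,
    Good T M' (n + 1) (TopologicalSpace.denseSeq (Fin d → lpC 1) k) (1 / ((n : ℝ) + 1)) u := by
  have := dense_iInter_of_isOpen (ι := ℕ × ℕ × ℕ)
    (f := fun z => interior {u : Fin d → lpC 1 | Good T z.1 (z.2.1 + 1)
      (TopologicalSpace.denseSeq (Fin d → lpC 1) z.2.2) (1 / ((z.2.1 : ℝ) + 1)) u})
    (fun z => isOpen_interior) (fun z => by
      intro x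
      rw [Metric.mem_closure_iff]
      intro ε hε
      obtain ⟨w, hw1, hw2⟩ := good_dense T hT z.1 (z.2.1 + 1) (by omega)
        (TopologicalSpace.denseSeq (Fin d → lpC 1) z.2.2) (1 / ((z.2.1 : ℝ) + 1) / 2)
        (by positivity) x ε hε
      refine ⟨w, ?_, by rw [dist_comm, dist_eq_norm]; exact hw1⟩
      exact mem_interior_iff_mem_nhds.2 (good_open T hT z.1 (z.2.1 + 1) (by omega) _ _
        (by positivity) w hw2))
  obtain ⟨u, hu⟩ := this.nonempty
  refine ⟨u, fun M' n k => ?_⟩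
  have := Set.mem_iInter.1 hu (M', n, k)
  have h2 := interior_subset (s := {u : Fin d → lpC 1 | Good T M' (n + 1)
      (TopologicalSpace.denseSeq (Fin d → lpC 1) k) (1 / ((n : ℝ) + 1)) u}) this
  exact h2

lemma poly_dense {d : ℕ} (T : (Fin d → ℝ) → ((Fin d → lpC 1) →L[ℂ] (Fin d → lpC 1)))
    (u : Fin d → lpC 1) (hu : ∀ M' n k : ℕ,
    Good T M' (n + 1) (TopologicalSpace.denseSeq (Fin d → lpC 1) k) (1 / ((n : ℝ) + 1)) u)
    (P : Polynomial ℂ) (hP : P ≠ 0) (hP0 : P.coeff 0 = 0) (lam : Fin d → ℝ) (hl : ∀ i, 0 < lam i) :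
    Dense (Set.range fun n : ℕ => ((T lam) ^ (n + 1)) (Polynomial.aeval u P)) := by
  intro y
  rw [Metric.mem_closure_iff]
  intro ε hε
  set b := P.leadingCoeff with hb
  have hb0 : b ≠ 0 := Polynomial.leadingCoeff_ne_zero.2 hP
  have hbn : 0 < ‖b‖ := norm_pos_iff.2 hb0
  obtain ⟨M', hM'⟩ : ∃ M', P.natDegree = M' + 1 := by
    refine Nat.exists_eq_succ_of_ne_zero fun h => ?_
    apply hb0
    rw [hb, Polynomial.leadingCoeff, h, hP0]
  set c : ℕ → ℂ := fun m => b⁻¹ * P.coeff m with hc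
  have hpoly : Polynomial.aeval u P = b • poly M' c u := by
    rw [Polynomial.aeval_eq_sum_range, hM', sum_range_succ, poly, smul_add, smul_sum, add_comm]
    congr 1
    · rw [hb, Polynomial.leadingCoeff, hM']
    · refine sum_congr rfl fun m _ => ?_
      rw [smul_smul, hc]
      congr 1
      field_simp
  -- choose n
  obtain ⟨n, hn⟩ := exists_nat_ge ((∑ m ∈ range (M' + 1), ‖c m‖) + (∑ i, lam i) +
    (∑ i, 1 / lam i) + 2 * ‖b‖ / ε)
  have s1 : 0 ≤ ∑ m ∈ range (M' + 1), ‖c m‖ := sum_nonneg fun _ _ => norm_nonneg _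
  have s2 : 0 ≤ ∑ i, lam i := sum_nonneg fun i _ => (hl i).le
  have s3 : 0 ≤ ∑ i, 1 / lam i := sum_nonneg fun i _ => by have := hl i; positivity
  have s4 : 0 ≤ 2 * ‖b‖ / ε := by positivity
  have hn1 : (0 : ℝ) < n + 1 := by positivity
  obtain ⟨z, ⟨k, rfl⟩, hz⟩ := Metric.mem_closure_iff.1
    ((TopologicalSpace.denseRange_denseSeq (Fin d → lpC 1)) (b⁻¹ • y)) (ε / (2 * ‖b‖))
    (by positivity)
  obtain ⟨Nm, h⟩ := hu M' n k
  obtain ⟨N, -, hN⟩ := h lam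
    (fun i => by
      have := single_le_sum (f := fun i => 1 / lam i)
        (fun i _ => by have := hl i; positivity) (mem_univ i)
      have hli := hl i
      push_cast
      rw [div_le_iff₀ hn1]
      rw [div_le_iff₀ hli] at this
      nlinarith)
    (fun i => by
      have := single_le_sum (f := fun i => lam i) (fun i _ => (hl i).le) (mem_univ i)
      push_cast
      linarith)
    c (fun m hm => by
      have := single_le_sum (f := fun m => ‖c m‖) (fun i _ => norm_nonneg _) hm
      push_cast
      linarith)
  refine ⟨_, ⟨N, rfl⟩, ?_⟩
  simp only
  rw [hpoly, map_smul, dist_eq_norm]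
  set S := ((T lam) ^ (N + 1)) (poly M' c u) with hS
  have e1 : y - b • S = b • ((b⁻¹ • y - TopologicalSpace.denseSeq (Fin d → lpC 1) k) -
      (S - TopologicalSpace.denseSeq (Fin d → lpC 1) k)) := by
    rw [sub_sub_sub_cancel_right, smul_sub, smul_smul, mul_inv_cancel₀ hb0, one_smul]
  rw [e1, norm_smul]
  rw [dist_eq_norm] at hz
  have e2 : 1 / ((n : ℝ) + 1) ≤ ε / (2 * ‖b‖) := by
    rw [div_le_div_iff₀ hn1 (by positivity)]
    have : 2 * ‖b‖ / ε ≤ n + 1 := by linarith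
    rw [div_le_iff₀ hε] at this
    linarith
  have e3 := norm_sub_le (b⁻¹ • y - TopologicalSpace.denseSeq (Fin d → lpC 1) k)
    (S - TopologicalSpace.denseSeq (Fin d → lpC 1) k)
  have e4 : ‖(b⁻¹ • y - TopologicalSpace.denseSeq (Fin d → lpC 1) k) -
      (S - TopologicalSpace.denseSeq (Fin d → lpC 1) k)‖ < ε / ‖b‖ := by
    have : ε / ‖b‖ = ε / (2 * ‖b‖) + ε / (2 * ‖b‖) := by field_simp; ring
    linarith
  calc _ < ‖b‖ * (ε / ‖b‖) := by gcongr
    _ = ε := by field_simp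

theorem main (d : ℕ) (hd : 1 ≤ d)
    (T : (Fin d → ℝ) → ((Fin d → lpC 1) →L[ℂ] (Fin d → lpC 1)))
    (hT : ∀ lam : Fin d → ℝ, (∀ i, 0 < lam i) →
      IsProductShift 1 d (fun a n => 1 + a / (n : ℝ)) (T lam) lam) :
    CommonHypercyclicAlgebraConv d {lam | ∀ i, 0 < lam i} T := by
  obtain ⟨u, hu⟩ := Aux.exists_good T hT
  refine ⟨{x | ∃ P : Polynomial ℂ, P.coeff 0 = 0 ∧ Polynomial.aeval u P = x},
    ⟨0, by simp, by simp⟩, ?_, ?_, ?_, ?_, ?_⟩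
  · rintro x ⟨P, hP, rfl⟩ y ⟨Q, hQ, rfl⟩
    exact ⟨P + Q, by simp [hP, hQ], by rw [map_add]⟩
  · rintro c x ⟨P, hP, rfl⟩
    exact ⟨c • P, by simp [hP], by rw [map_smul]⟩
  · rintro x ⟨P, hP, rfl⟩ y ⟨Q, hQ, rfl⟩
    refine ⟨_, ⟨P * Q, by simp [Polynomial.mul_coeff_zero, hP], rfl⟩, fun i n => ?_⟩
    rw [map_mul, Pi.mul_apply, Aux.mul_apply, Finset.Nat.sum_antidiagonal_eq_sum_range_succ_mk]
  · refine ⟨u, ⟨Polynomial.X, by simp, by simp⟩, ?_⟩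
    intro h0
    have hD := Aux.poly_dense T u hu Polynomial.X Polynomial.X_ne_zero (by simp)
      (fun _ => 1) (fun _ => one_pos)
    have : Nonempty (Fin d) := ⟨⟨0, hd⟩⟩
    have hne : (1 : Fin d → lpC 1) ≠ 0 := by
      intro h
      have h1 : (1 : lpC 1) = 0 := congrFun h ⟨0, hd⟩
      have h2 : ‖(1 : lpC 1)‖ = 1 := norm_one
      rw [h1, norm_zero] at h2
      exact zero_ne_one h2
    obtain ⟨z, ⟨N, rfl⟩, hz⟩ := Metric.mem_closure_iff.1 (hD 1) ‖(1 : Fin d → lpC 1)‖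
      (norm_pos_iff.2 hne)
    simp only [Polynomial.aeval_X, h0, map_zero, dist_zero_right] at hz
    exact lt_irrefl _ hz
  · rintro x ⟨P, hP, rfl⟩ hx lam hlam
    refine Aux.poly_dense T u hu P (fun h => hx (by rw [h, map_zero])) hP lam hlam

end Aux

/-- Theorem 1.4 of the paper, for the weights `w n (a) = 1 + a / n`. -/
theorem stmt_5 (d : ℕ) (hd : 1 ≤ d)
    (T : (Fin d → ℝ) → ((Fin d → lpC 1) →L[ℂ] (Fin d → lpC 1)))
    (hT : ∀ lam : Fin d → ℝ, (∀ i, 0 < lam i) →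
      IsProductShift 1 d (fun a n => 1 + a / (n : ℝ)) (T lam) lam) :
    CommonHypercyclicAlgebraConv d {lam | ∀ i, 0 < lam i} T :=
  Aux.main d hd T hT
end
end

section
/- Fix α ∈ (0, 1/2) and β > 2α. Then there exists a constant c > 0 such that for every D > 0, every compact square K ⊂ ℝ² whose diameter (in the sup-norm) is at most cD, every τ > 0, every η > 0 and every integer N ≥ 1, there exist an integer q ≥ 1, integers n_0 < n_1 < ⋯ < n_{q−1}, points λ_0, …, λ_{q−1} ∈ ℝ² with λ_j = (x_j, y_j), and compact squares Λ_0, …, Λ_{q−1} ⊂ ℝ² such that: (a) n_0 ≥ N and n_{j+1} − n_j ≥ N for all 0 ≤ j ≤ q−2; (b) K = ∪_{j=0}^{q−1} Λ_j and Λ_j ⊆ [x_j, x_j + τ/n_j^α] × [y_j, y_j + τ/n_j^α] for every j; (c) for all 0 ≤ j < l ≤ q−1, all λ ∈ Λ_j and all μ ∈ Λ_l, ‖λ − μ‖_∞ ≤ D·(n_l − n_j)^α/n_l^α; (d) Σ_{j=0}^{q−1} 1/n_j^β ≤ η; (e) for every j ∈ {0,…,q−1}, Σ_{l≠j} 1/|n_l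 − n_j|^β ≤ η. -/
open Finset

noncomputable section

/-- Discrete Hilbert curve of order `m`. -/
def hil : ℕ → ℕ → ℕ × ℕ
  | 0, _ => (0, 0)
  | m + 1, j =>
    if j < 4 ^ m then ((hil m j).2, (hil m j).1)
    else if j < 2 * 4 ^ m then ((hil m (j - 4 ^ m)).1, (hil m (j - 4 ^ m)).2 + 2 ^ m)
    else if j < 3 * 4 ^ m then
      ((hil m (j - 2 * 4 ^ m)).1 + 2 ^ m, (hil m (j - 2 * 4 ^ m)).2 + 2 ^ m)
    else (2 * 2 ^ m - 1 - (hil m (j - 3 * 4 ^ m)).2, 2 ^ m - 1 - (hil m (j - 3 * 4 ^ m)).1)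

theorem hil_cases (m j : ℕ) (hj : j < 4 ^ (m + 1)) :
    (j < 4 ^ m ∧ hil (m+1) j = ((hil m j).2, (hil m j).1)) ∨
    (∃ r, r < 4 ^ m ∧ j = 4 ^ m + r ∧ hil (m+1) j = ((hil m r).1, (hil m r).2 + 2 ^ m)) ∨
    (∃ r, r < 4 ^ m ∧ j = 2 * 4 ^ m + r ∧
      hil (m+1) j = ((hil m r).1 + 2 ^ m, (hil m r).2 + 2 ^ m)) ∨
    (∃ r, r < 4 ^ m ∧ j = 3 * 4 ^ m + r ∧
      hil (m+1) j = (2 * 2 ^ m - 1 - (hil m r).2, 2 ^ m - 1 - (hil m r).1)) := by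
  rw [pow_succ] at hj
  by_cases h1 : j < 4 ^ m
  · left; exact ⟨h1, by simp [hil, h1]⟩
  right
  by_cases h2 : j < 2 * 4 ^ m
  · left; exact ⟨j - 4 ^ m, by omega, by omega, by simp [hil, h1, h2]⟩
  right
  by_cases h3 : j < 3 * 4 ^ m
  · left; exact ⟨j - 2 * 4 ^ m, by omega, by omega, by simp [hil, h1, h2, h3]⟩
  right
  exact ⟨j - 3 * 4 ^ m, by omega, by omega, by simp [hil, h1, h2, h3]⟩

theorem hil_lt (m : ℕ) : ∀ j < 4 ^ m, (hil m j).1 < 2 ^ m ∧ (hil m j).2 < 2 ^ m := by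
  induction m with
  | zero => intro j _; simp [hil]
  | succ m ih =>
    intro j hj
    have hp : 2 ^ (m + 1) = 2 * 2 ^ m := by ring
    have h0 : 0 < 2 ^ m := by positivity
    rcases hil_cases m j hj with ⟨hr, h⟩ | ⟨r, hr, -, h⟩ | ⟨r, hr, -, h⟩ | ⟨r, hr, -, h⟩ <;>
    · have := ih _ hr
      rw [h, hp]; dsimp only; omega

theorem hil_start (m : ℕ) : ∀ k ≤ m, ∀ j < 4 ^ k, (hil m j).1 < 2 ^ k ∧ (hil m j).2 < 2 ^ k := by
  induction m with
  | zero => intro k _ j _; simp [hil]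
  | succ m ih =>
    intro k hk j hj
    rcases Nat.lt_or_ge m k with hk' | hk'
    · obtain rfl : k = m + 1 := by omega
      exact hil_lt _ j hj
    have h4 : 4 ^ k ≤ 4 ^ m := Nat.pow_le_pow_right (by norm_num) hk'
    have hj' : j < 4 ^ m := by omega
    have := ih k hk' j hj
    simp [hil, hj', this]

theorem hil_end (m : ℕ) : ∀ k ≤ m, ∀ j < 4 ^ m, 4 ^ m ≤ j + 4 ^ k →
    2 ^ m ≤ (hil m j).1 + 2 ^ k ∧ (hil m j).2 < 2 ^ k := by
  induction m with
  | zero => intro k hk j _; obtain rfl : k = 0 := by omega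
            simp [hil]
  | succ m ih =>
    intro k hk j hj hjk
    rcases Nat.lt_or_ge m k with hk' | hk'
    · obtain rfl : k = m + 1 := by omega
      exact ⟨by omega, (hil_lt _ j hj).2⟩
    have h4 : 4 ^ k ≤ 4 ^ m := Nat.pow_le_pow_right (by norm_num) hk'
    have h2 : 2 ^ k ≤ 2 ^ m := Nat.pow_le_pow_right (by norm_num) hk'
    have h0 : 0 < 2 ^ k := by positivity
    have e4 : 4 ^ (m + 1) = 4 * 4 ^ m := by ring
    have e2 : 2 ^ (m + 1) = 2 * 2 ^ m := by ring
    rcases hil_cases m j hj with ⟨hr, h⟩ | ⟨r, hr, hj', h⟩ | ⟨r, hr, hj', h⟩ | ⟨r, hr, hj', h⟩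
    · omega
    · omega
    · omega
    · have := ih k hk' r hr (by omega)
      have := hil_lt m r hr
      rw [h]; dsimp only; omega

theorem hil_holder (m : ℕ) : ∀ k j l, j ≤ l → l < 4 ^ m → l < j + 4 ^ k →
    (hil m l).1 + 1 ≤ (hil m j).1 + 2 * 2 ^ k ∧ (hil m j).1 + 1 ≤ (hil m l).1 + 2 * 2 ^ k ∧
    (hil m l).2 + 1 ≤ (hil m j).2 + 2 * 2 ^ k ∧ (hil m j).2 + 1 ≤ (hil m l).2 + 2 * 2 ^ k := by
  induction m with
  | zero => intro k j l _ _ _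
            have h0 : 0 < 2 ^ k := by positivity
            simp [hil]; omega
  | succ m ih =>
    intro k j l hjl hl hk
    have hj := lt_of_le_of_lt hjl hl
    rcases Nat.lt_or_ge m k with hk' | hk'
    · have h2 : 2 ^ (m+1) ≤ 2 ^ k := Nat.pow_le_pow_right (by norm_num) hk'
      have := hil_lt _ j hj
      have := hil_lt _ l hl
      omega
    have h4 : 4 ^ k ≤ 4 ^ m := Nat.pow_le_pow_right (by norm_num) hk'
    have h2 : 2 ^ k ≤ 2 ^ m := Nat.pow_le_pow_right (by norm_num) hk'
    have h0 : 0 < 2 ^ k := by positivity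
    have e4 : 4 ^ (m + 1) = 4 * 4 ^ m := by ring
    have e2 : 2 ^ (m + 1) = 2 * 2 ^ m := by ring
    rcases hil_cases m j hj with ⟨hr, h⟩ | ⟨r, hr, hj', h⟩ | ⟨r, hr, hj', h⟩ | ⟨r, hr, hj', h⟩ <;>
    rcases hil_cases m l hl with ⟨ht, g⟩ | ⟨t, ht, hl', g⟩ | ⟨t, ht, hl', g⟩ | ⟨t, ht, hl', g⟩ <;>
    first
    | (exfalso; omega)
    | (have i := ih k j l hjl ht hk
       rw [h, g]; dsimp only; omega)
    | (have i := ih k r t (by omega) ht (by omega)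
       have := hil_lt m _ hr
       have := hil_lt m _ ht
       rw [h, g]; dsimp only; omega)
    | (have i1 := hil_end m k hk' _ hr (by omega)
       have i2 := hil_start m k hk' t (by omega)
       have := hil_lt m _ hr
       have := hil_lt m _ ht
       rw [h, g]; dsimp only; omega)

theorem hil_surj (m : ℕ) : ∀ a b, a < 2 ^ m → b < 2 ^ m → ∃ j < 4 ^ m, hil m j = (a, b) := by
  induction m with
  | zero => intro a b ha hb; exact ⟨0, by simp, by simp [hil]; omega⟩
  | succ m ih =>
    intro a b ha hb
    have e4 : 4 ^ (m + 1) = 4 * 4 ^ m := by ring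
    have e2 : 2 ^ (m + 1) = 2 * 2 ^ m := by ring
    rcases Nat.lt_or_ge a (2 ^ m) with h1 | h1 <;> rcases Nat.lt_or_ge b (2 ^ m) with h2 | h2
    · obtain ⟨r, hr, h⟩ := ih b a h2 h1
      exact ⟨r, by omega, by simp [hil, hr, h]⟩
    · obtain ⟨r, hr, h⟩ := ih a (b - 2 ^ m) h1 (by omega)
      refine ⟨4 ^ m + r, by omega, ?_⟩
      have : 4 ^ m + r < 2 * 4 ^ m := by omega
      simp [hil, h, this]; omega
    · obtain ⟨r, hr, h⟩ := ih (2 ^ m - 1 - b) (2 * 2 ^ m - 1 - a) (by omega) (by omega)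
      refine ⟨3 * 4 ^ m + r, by omega, ?_⟩
      have a1 : ¬ 3 * 4 ^ m + r < 2 * 4 ^ m := by omega
      have a2 : ¬ 3 * 4 ^ m + r < 4 ^ m := by omega
      simp [hil, h, a1, a2]; omega
    · obtain ⟨r, hr, h⟩ := ih (a - 2 ^ m) (b - 2 ^ m) (by omega) (by omega)
      refine ⟨2 * 4 ^ m + r, by omega, ?_⟩
      have a1 : 2 * 4 ^ m + r < 3 * 4 ^ m := by omega
      have a2 : ¬ 2 * 4 ^ m + r < 4 ^ m := by omega
      simp [hil, h, a1, a2]; omega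

theorem cover1 (u t p : ℝ) (hu : u ≤ p) (S : ℕ) : 1 ≤ S → p ≤ u + S * t →
    ∃ a < S, u + a * t ≤ p ∧ p ≤ u + a * t + t := by
  induction S with
  | zero => intro h; omega
  | succ S ih =>
    intro _ hp
    push_cast at hp
    rcases Nat.eq_zero_or_pos S with h | h
    · subst h
      exact ⟨0, by simp, by simpa using hu, by simpa using hp⟩
    · by_cases h' : p ≤ u + S * t
      · obtain ⟨a, ha, h⟩ := ih h h'
        exact ⟨a, by omega, h⟩
      · exact ⟨S, by omega, by linarith, by linarith⟩

theorem sum_bd (b : ℝ) (h0 : 0 < b) (h1 : b < 1) (n : ℕ) :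
    ∑ k ∈ Finset.range n, 1 / ((k : ℝ) + 1) ^ b ≤ (n : ℝ) ^ (1 - b) / (1 - b) := by
  induction n with
  | zero => simp; positivity
  | succ n ih =>
    rw [Finset.sum_range_succ]
    have hb : 0 < 1 - b := by linarith
    set x : ℝ := (n : ℝ) + 1 with hx
    have hx0 : 0 < x := by positivity
    have hx1 : 1 ≤ x := by rw [hx]; linarith [(Nat.cast_nonneg n : (0:ℝ) ≤ n)]
    have key : (n : ℝ) ^ (1 - b) ≤ x ^ (1 - b) - (1 - b) * (1 / x ^ b) := by
      have e : (n : ℝ) = x * (1 + (-(1 / x))) := by field_simp; rw [hx]; ring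
      have hinv : 1 / x ≤ 1 := by rw [div_le_one hx0]; exact hx1
      have B := rpow_one_add_le_one_add_mul_self (s := -(1/x)) (by linarith) hb.le (by linarith)
      rw [e, Real.mul_rpow hx0.le (by linarith)]
      have hpos : 0 < x ^ (1 - b) := by positivity
      have := mul_le_mul_of_nonneg_left B hpos.le
      have e2 : x ^ (1 - b) * (1 / x) = 1 / x ^ b := by
        rw [Real.rpow_sub hx0, Real.rpow_one]; field_simp
      calc _ ≤ _ := this
        _ = x ^ (1 - b) - (1 - b) * (x ^ (1 - b) * (1 / x)) := by ring
        _ = _ := by rw [e2]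
    push_cast
    calc _ ≤ (n : ℝ) ^ (1 - b) / (1 - b) + 1 / x ^ b := by gcongr
      _ ≤ (x ^ (1 - b) - (1 - b) * (1 / x ^ b)) / (1 - b) + 1 / x ^ b := by gcongr
      _ = _ := by field_simp; ring

theorem params (α b r s τ η : ℝ) (hα : 0 < α) (h1 : 2 * α < r) (h2 : r < b) (h3 : b < 1)
    (hs : 0 ≤ s) (hτ : 0 < τ) (hη : 0 < η) (N : ℕ) :
    ∃ m d : ℕ, N ≤ d ∧ s * (2 * (d : ℝ) * 4 ^ m) ^ α ≤ τ * 2 ^ m ∧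
      ((4 : ℝ) ^ m) ^ (1 - b) * (2 / (1 - b)) ≤ η * (d : ℝ) ^ b := by
  have hr : 0 < r := by linarith
  have hb : 0 < 1 - b := by linarith
  have hg : 0 < 1 / r - 1 := by
    have : 1 < 1 / r := by rw [lt_div_iff₀ hr]; linarith
    linarith
  have he1 : 0 < 1 / 2 - α / r := by
    have : α / r < 1 / 2 := by rw [div_lt_iff₀ hr]; linarith
    linarith
  have he2 : 0 < b / r - 1 := by
    have : 1 < b / r := by rw [lt_div_iff₀ hr]; linarith
    linarith
  have hT : Filter.Tendsto (fun m : ℕ => (4 : ℝ) ^ m) Filter.atTop Filter.atTop :=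
    tendsto_pow_atTop_atTop_of_one_lt (by norm_num)
  have E1 := ((tendsto_rpow_atTop hg).comp hT).eventually_ge_atTop (N : ℝ)
  have t2 := ((tendsto_rpow_neg_atTop he1).comp hT).const_mul (s * 4 ^ α)
  have t3 := ((tendsto_rpow_neg_atTop he2).comp hT).const_mul (2 / (1 - b))
  rw [mul_zero] at t2 t3
  have E2 := t2.eventually_le_const hτ
  have E3 := t3.eventually_le_const hη
  obtain ⟨m, H1, H2, H3⟩ := (E1.and (E2.and E3)).exists
  simp only [Function.comp] at H1 H2 H3
  have hQ1 : (1 : ℝ) ≤ 4 ^ m := one_le_pow₀ (by norm_num)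
  have h2m : (2 : ℝ) ^ m = ((4 : ℝ) ^ m) ^ (1 / 2 : ℝ) := by
    rw [← Real.sqrt_eq_rpow, show (4 : ℝ) = 2 * 2 by norm_num, mul_pow,
      Real.sqrt_mul_self (by positivity)]
  refine ⟨m, ⌈((4 : ℝ) ^ m) ^ (1 / r - 1)⌉₊, ?_, ?_, ?_⟩
  · exact_mod_cast H1.trans (Nat.le_ceil _)
  all_goals
    try rw [h2m]
    clear E1 t2 t3 E2 E3 H1 hT h2m
    generalize (4 : ℝ) ^ m = Q at *
    have hQ : 0 < Q := by linarith
  · have hc : (⌈Q ^ (1 / r - 1)⌉₊ : ℝ) ≤ 2 * Q ^ (1 / r - 1) := by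
      have := Nat.ceil_lt_add_one (show 0 ≤ Q ^ (1 / r - 1) by positivity)
      have := Real.one_le_rpow hQ1 hg.le
      linarith
    have e : 2 * (2 * Q ^ (1 / r - 1)) * Q = 4 * Q ^ (1 / r) := by
      rw [Real.rpow_sub hQ, Real.rpow_one]; field_simp; ring
    calc s * (2 * (⌈Q ^ (1 / r - 1)⌉₊ : ℝ) * Q) ^ α
        ≤ s * (2 * (2 * Q ^ (1 / r - 1)) * Q) ^ α := by gcongr
      _ = s * 4 ^ α * Q ^ (-(1 / 2 - α / r)) * Q ^ (1 / 2 : ℝ) := by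
          rw [e, Real.mul_rpow (by norm_num) (by positivity), ← Real.rpow_mul hQ.le,
            mul_assoc _ (Q ^ _) (Q ^ _), ← Real.rpow_add hQ]
          ring_nf
      _ ≤ _ := by gcongr
  · calc Q ^ (1 - b) * (2 / (1 - b))
        = 2 / (1 - b) * Q ^ (-(b / r - 1)) * (Q ^ (1 / r - 1)) ^ b := by
          rw [← Real.rpow_mul hQ.le, mul_assoc, ← Real.rpow_add hQ, mul_comm]
          ring_nf
      _ ≤ η * (Q ^ (1 / r - 1)) ^ b := by gcongr
      _ ≤ _ := by
        gcongr
        exacts [by linarith, Nat.le_ceil _]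

theorem sum_erase (f g : ℕ → ℝ) (q j : ℕ) (hj : j < q) (hf : ∀ k, 0 ≤ f k)
    (h1 : ∀ l < j, g l ≤ f (j - 1 - l)) (h2 : ∀ i, j + 1 + i < q → g (j + 1 + i) ≤ f i) :
    ∑ l ∈ (Finset.range q).erase j, g l ≤ 2 * ∑ k ∈ Finset.range q, f k := by
  have e : (Finset.range q).erase j = Finset.range j ∪ Finset.Ico (j + 1) q := by
    ext l; simp; omega
  have hd : Disjoint (Finset.range j) (Finset.Ico (j + 1) q) := by
    rw [Finset.disjoint_left]; intro a; simp; omega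
  rw [e, Finset.sum_union hd, Finset.sum_Ico_eq_sum_range, two_mul]
  apply add_le_add
  · calc _ ≤ ∑ l ∈ Finset.range j, f (j - 1 - l) :=
          Finset.sum_le_sum fun l hl => h1 l (Finset.mem_range.1 hl)
      _ = ∑ l ∈ Finset.range j, f l := Finset.sum_range_reflect f j
      _ ≤ _ := Finset.sum_le_sum_of_subset_of_nonneg
          (Finset.range_mono hj.le) (fun i _ _ => hf i)
  · calc _ ≤ ∑ l ∈ Finset.range (q - (j + 1)), f l :=
          Finset.sum_le_sum fun l hl => h2 l (by have := Finset.mem_range.1 hl; omega)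
      _ ≤ _ := Finset.sum_le_sum_of_subset_of_nonneg
          (Finset.range_mono (by omega)) (fun i _ _ => hf i)

/-- one-coordinate distance bound -/
theorem coord_bd (w t p p' : ℝ) (a a' K : ℕ) (ht : 0 ≤ t) (h1 : a + 1 ≤ a' + K)
    (h2 : a' + 1 ≤ a + K) (hp : p ∈ Set.Icc (w + a * t) (w + a * t + t))
    (hp' : p' ∈ Set.Icc (w + a' * t) (w + a' * t + t)) : |p - p'| ≤ K * t := by
  have h1' : (a : ℝ) + 1 ≤ a' + K := by exact_mod_cast h1
  have h2' : (a' : ℝ) + 1 ≤ a + K := by exact_mod_cast h2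
  have := mul_le_mul_of_nonneg_right h1' ht
  have := mul_le_mul_of_nonneg_right h2' ht
  obtain ⟨q1, q2⟩ := hp
  obtain ⟨q3, q4⟩ := hp'
  rw [abs_le]
  constructor <;> nlinarith

theorem stmt_7 (α β : ℝ) (hα0 : 0 < α) (hα : α < 1 / 2) (hβ : 2 * α < β) :
    ∃ c > (0 : ℝ), ∀ D > (0 : ℝ), ∀ u v s : ℝ, 0 ≤ s → s ≤ c * D →
      ∀ τ > (0 : ℝ), ∀ η > (0 : ℝ), ∀ N : ℕ, 1 ≤ N →
        ∃ q : ℕ, 1 ≤ q ∧ ∃ n : ℕ → ℕ, ∃ x y cx cy sl : ℕ → ℝ,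
          (∀ j < q, 0 ≤ sl j) ∧
          -- (a)
          (N ≤ n 0 ∧ ∀ j : ℕ, j + 2 ≤ q → n j + N ≤ n (j + 1)) ∧
          -- (b)
          (Set.Icc u (u + s) ×ˢ Set.Icc v (v + s) =
            ⋃ j ∈ Finset.range q,
              Set.Icc (cx j) (cx j + sl j) ×ˢ Set.Icc (cy j) (cy j + sl j)) ∧
          (∀ j < q,
            Set.Icc (cx j) (cx j + sl j) ⊆ Set.Icc (x j) (x j + τ / (n j : ℝ) ^ α) ∧
            Set.Icc (cy j) (cy j + sl j) ⊆ Set.Icc (y j) (y j + τ / (n j : ℝ) ^ α)) ∧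
          -- (c)
          (∀ j l : ℕ, j < l → l < q →
            ∀ lam ∈ Set.Icc (cx j) (cx j + sl j) ×ˢ Set.Icc (cy j) (cy j + sl j),
            ∀ mu ∈ Set.Icc (cx l) (cx l + sl l) ×ˢ Set.Icc (cy l) (cy l + sl l),
              ‖lam - mu‖ ≤ D * ((n l : ℝ) - (n j : ℝ)) ^ α / (n l : ℝ) ^ α) ∧
          -- (d)
          (∑ j ∈ Finset.range q, 1 / (n j : ℝ) ^ β ≤ η) ∧
          -- (e)
          (∀ j < q, ∑ l ∈ (Finset.range q).erase j,
              1 / |(n l : ℝ) - (n j : ℝ)| ^ β ≤ η) := by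
  obtain ⟨b, hb1, hb2⟩ := exists_between (lt_min hβ (show 2 * α < 1 by linarith))
  have hbβ : b < β := hb2.trans_le (min_le_left _ _)
  have hb3 : b < 1 := hb2.trans_le (min_le_right _ _)
  obtain ⟨r, hr1, hr2⟩ := exists_between hb1
  have hb0 : 0 < b := by linarith
  have hb4 : 0 < 1 - b := by linarith
  refine ⟨1 / 8, by norm_num, ?_⟩
  intro D hD u v s hs hsD τ hτ η hη N hN
  obtain ⟨m, d, hNd, hP1, hP2⟩ := params α b r s τ η hα0 hr1 hr2 hb3 hs hτ hη N
  have hd1 : 1 ≤ d := hN.trans hNd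
  have hdR : (0 : ℝ) < d := by exact_mod_cast hd1
  have hdR1 : (1 : ℝ) ≤ d := by exact_mod_cast hd1
  have hq1 : 1 ≤ 4 ^ m := Nat.one_le_pow _ _ (by norm_num)
  have hQ1 : (1 : ℝ) ≤ 4 ^ m := one_le_pow₀ (by norm_num)
  have hQ : (0 : ℝ) < 4 ^ m := by positivity
  have hS : (0 : ℝ) < 2 ^ m := by positivity
  have hSS : (2 : ℝ) ^ m * 2 ^ m = 4 ^ m := by rw [← mul_pow]; norm_num
  set t : ℝ := s / 2 ^ m with ht
  have ht0 : 0 ≤ t := by positivity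
  have htS : (2 : ℝ) ^ m * t = s := by rw [ht]; field_simp
  have hn : ∀ j : ℕ, ((d * (4 ^ m + j) : ℕ) : ℝ) = d * (4 ^ m + j) := by intro j; push_cast; ring
  have hbd : ∀ a : ℕ, a < 2 ^ m → (a : ℝ) * t + t ≤ s := by
    intro a ha
    have : (a : ℝ) + 1 ≤ 2 ^ m := by exact_mod_cast ha
    rw [← htS]; nlinarith
  have hτt : ∀ j < 4 ^ m, t ≤ τ / ((d * (4 ^ m + j) : ℕ) : ℝ) ^ α := by
    intro j hj
    have hj' : (j : ℝ) ≤ 4 ^ m := by exact_mod_cast hj.le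
    rw [hn, le_div_iff₀ (by positivity), ht, div_mul_eq_mul_div, div_le_iff₀ hS]
    refine le_trans ?_ hP1
    have : (d : ℝ) * (4 ^ m + j) ≤ 2 * d * 4 ^ m := by nlinarith
    gcongr
  -- the sums
  have hsum : 2 * ∑ k ∈ Finset.range (4 ^ m), 1 / (d : ℝ) ^ b * (1 / ((k : ℝ) + 1) ^ b) ≤ η := by
    rw [← Finset.mul_sum]
    have h := sum_bd b hb0 hb3 (4 ^ m)
    push_cast at h
    have hdb : 0 < (d : ℝ) ^ b := by positivity
    calc _ ≤ 2 * (1 / (d : ℝ) ^ b * (((4 : ℝ) ^ m) ^ (1 - b) / (1 - b))) := by gcongr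
      _ = (((4 : ℝ) ^ m) ^ (1 - b) * (2 / (1 - b))) / (d : ℝ) ^ b := by field_simp
      _ ≤ η := by rw [div_le_iff₀ hdb]; exact hP2
  have hterm : ∀ k : ℕ, ∀ z : ℝ, (d : ℝ) * (k + 1) ≤ z →
      1 / z ^ β ≤ 1 / (d : ℝ) ^ b * (1 / ((k : ℝ) + 1) ^ b) := by
    intro k z hz
    have hk : (0 : ℝ) ≤ k := Nat.cast_nonneg k
    have h1 : 1 ≤ (d : ℝ) * (k + 1) := by nlinarith
    rw [one_div_mul_one_div, ← Real.mul_rpow hdR.le (by positivity)]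
    apply one_div_le_one_div_of_le (by positivity)
    calc ((d : ℝ) * (k + 1)) ^ b ≤ z ^ b := by gcongr
      _ ≤ z ^ β := Real.rpow_le_rpow_of_exponent_le (h1.trans hz) hbβ.le
  refine ⟨4 ^ m, hq1, fun j => d * (4 ^ m + j), fun j => u + (hil m j).1 * t,
    fun j => v + (hil m j).2 * t, fun j => u + (hil m j).1 * t,
    fun j => v + (hil m j).2 * t, fun _ => t, fun _ _ => ht0, ⟨?_, ?_⟩, ?_, ?_, ?_, ?_, ?_⟩
  · show N ≤ d * (4 ^ m + 0)
    nlinarith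
  · intro j _
    show d * (4 ^ m + j) + N ≤ d * (4 ^ m + (j + 1))
    nlinarith
  · ext ⟨p, p'⟩
    simp only [Set.mem_prod, Set.mem_Icc, Set.mem_iUnion, Finset.mem_range, exists_prop]
    constructor
    · rintro ⟨⟨h1, h2⟩, h3, h4⟩
      have hS1 : 1 ≤ 2 ^ m := Nat.one_le_pow _ _ (by norm_num)
      obtain ⟨a, ha, ha'⟩ := cover1 u t p h1 (2 ^ m) hS1 (by push_cast; rw [htS]; exact h2)
      obtain ⟨a', hb, hb'⟩ := cover1 v t p' h3 (2 ^ m) hS1 (by push_cast; rw [htS]; exact h4)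
      obtain ⟨j, hj, hh⟩ := hil_surj m a a' ha hb
      refine ⟨j, hj, ?_⟩
      rw [hh]; exact ⟨ha', hb'⟩
    · rintro ⟨j, hj, ⟨h1, h2⟩, h3, h4⟩
      have hl := hil_lt m j hj
      have i1 := hbd _ hl.1
      have i2 := hbd _ hl.2
      have i3 : 0 ≤ ((hil m j).1 : ℝ) * t := by positivity
      have i4 : 0 ≤ ((hil m j).2 : ℝ) * t := by positivity
      refine ⟨⟨?_, ?_⟩, ?_, ?_⟩ <;> linarith
  · intro j hj
    have := hτt j hj
    exact ⟨Set.Icc_subset_Icc le_rfl (by dsimp only; linarith),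
      Set.Icc_subset_Icc le_rfl (by dsimp only; linarith)⟩
  · intro j l hjl hl lam hlam mu hmu
    have hk1 : 4 ^ Nat.log 4 (l - j) ≤ l - j := Nat.pow_log_le_self 4 (by omega)
    have hk2 : l - j < 4 ^ (Nat.log 4 (l - j) + 1) :=
      Nat.lt_pow_succ_log_self (by norm_num) (l - j)
    set k := Nat.log 4 (l - j) with hk
    obtain ⟨A1, A2, A3, A4⟩ := hil_holder m (k + 1) j l hjl.le hl (by omega)
    have B1 := coord_bd u t _ _ _ _ _ ht0 A2 A1 hlam.1 hmu.1
    have B2 := coord_bd v t _ _ _ _ _ ht0 A4 A3 hlam.2 hmu.2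
    have B : ‖lam - mu‖ ≤ ((2 * 2 ^ (k + 1) : ℕ) : ℝ) * t := by
      rw [Prod.norm_def]; exact max_le B1 B2
    refine B.trans ?_
    dsimp only
    rw [hn, hn]
    have hjlR : (j : ℝ) < l := by exact_mod_cast hjl
    have hlR : (l : ℝ) ≤ 4 ^ m := by exact_mod_cast hl.le
    have hj0 : (0 : ℝ) ≤ j := Nat.cast_nonneg j
    have hkR : (4 : ℝ) ^ k ≤ l - j := by
      have : ((4 ^ k : ℕ) : ℝ) ≤ ((l - j : ℕ) : ℝ) := by exact_mod_cast hk1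
      rw [Nat.cast_sub hjl.le] at this
      exact_mod_cast this
    set R : ℝ := (l - j) / (2 * 4 ^ m) with hR
    have hR0 : 0 < R := by rw [hR]; apply div_pos <;> linarith
    have hR1 : R ≤ 1 := by rw [hR, div_le_one (by positivity)]; linarith
    have hRR : R ≤ ((d : ℝ) * (4 ^ m + l) - d * (4 ^ m + j)) / (d * (4 ^ m + l)) := by
      have : ((d : ℝ) * (4 ^ m + l) - d * (4 ^ m + j)) / (d * (4 ^ m + l))
          = (l - j) / (4 ^ m + l) := by
        rw [← mul_sub, mul_div_mul_left _ _ hdR.ne']; ring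
      rw [this, hR]
      have : (0 : ℝ) ≤ l - j := by linarith
      gcongr
      linarith
    have hk3 : (2 : ℝ) ^ k / 2 ^ m ≤ 2 * R ^ (1 / 2 : ℝ) := by
      rw [← Real.sqrt_eq_rpow]
      have : (2 : ℝ) ^ k / 2 ^ m ≤ Real.sqrt (4 * R) := by
        apply Real.le_sqrt_of_sq_le
        rw [div_pow, ← pow_mul, ← pow_mul, mul_comm k, mul_comm m, pow_mul, pow_mul, hR]
        norm_num
        rw [div_le_iff₀ hQ]
        field_simp
        linarith [hkR]
      rw [Real.sqrt_mul (by norm_num), show (4 : ℝ) = 2 ^ 2 by norm_num,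
        Real.sqrt_sq (by norm_num)] at this
      exact this
    rw [mul_div_assoc, ← Real.div_rpow (by
      have : (d : ℝ) * (4 ^ m + j) ≤ d * (4 ^ m + l) := by gcongr
      linarith) (by positivity)]
    calc ((2 * 2 ^ (k + 1) : ℕ) : ℝ) * t = 4 * s * (2 ^ k / 2 ^ m) := by
          push_cast; rw [ht, pow_succ]; ring
      _ ≤ 4 * (1 / 8 * D) * (2 * R ^ (1 / 2 : ℝ)) := by gcongr
      _ = D * R ^ (1 / 2 : ℝ) := by ring
      _ ≤ D * R ^ α := by
          gcongr ?_ * ?_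
          exact Real.rpow_le_rpow_of_exponent_ge hR0 hR1 hα.le
      _ ≤ _ := by gcongr
  · calc _ ≤ ∑ k ∈ Finset.range (4 ^ m), 1 / (d : ℝ) ^ b * (1 / ((k : ℝ) + 1) ^ b) := by
          apply Finset.sum_le_sum
          intro k _
          apply hterm
          rw [hn]
          gcongr ?_ * ?_
          linarith
      _ ≤ _ := by
          have : 0 ≤ ∑ k ∈ Finset.range (4 ^ m), 1 / (d : ℝ) ^ b * (1 / ((k : ℝ) + 1) ^ b) := by
            positivity
          linarith
  · intro j hj
    refine le_trans (sum_erase (fun k => 1 / (d : ℝ) ^ b * (1 / ((k : ℝ) + 1) ^ b)) _ _ j hj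
      (fun k => by positivity) ?_ ?_) hsum
    · intro l hl
      apply hterm
      rw [hn, hn, ← mul_sub, abs_mul, abs_of_pos hdR]
      gcongr
      have : ((j - 1 - l : ℕ) : ℝ) + 1 = j - l := by
        have : j - 1 - l + 1 + l = j := by omega
        have : ((j - 1 - l : ℕ) : ℝ) + 1 + l = j := by exact_mod_cast this
        linarith
      rw [this, abs_sub_comm]
      refine le_trans (le_of_eq ?_) (le_abs_self _)
      ring
    · intro i _
      apply hterm
      rw [hn, hn, ← mul_sub, abs_mul, abs_of_pos hdR]
      gcongr
      refine le_trans (le_of_eq ?_) (le_abs_self _)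
      push_cast; ring
end
end
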